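/- arXiv:1705.05781 — 8 statements merged into one kernel-verified Lean document; each statement's English description precedes it below -/
import Mathlib

section
/- Let L be a finite modular semilattice. Then P(L), i.e., the poset L^ir of ∨-irreducible elements equipped with the induced inconsistency relation ⌣ and induced collinearity relation C, is a PPIP: the relations satisfy (IC1), (IC2), (CT1), (CT2), Regularity, weak Triangle, (CC1) and (CC2). -/
/-- The join of `a` and `b` exists (there is a least upper bound of the pair). -/
def JoinExists {α : Type*} [Preorder α] (a b : α) : Prop :=
  ∃ j, IsLUB ({a, b} : Set α) j

/-- `a` and `b` are incomparable. -/
def Incomp {α : Type*} [Preorder α] (a b : α) : Prop :=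
  ¬ a ≤ b ∧ ¬ b ≤ a

/-- A collinear triple: pairwise incomparable elements whose pairwise joins all exist
and coincide. -/
def Collinear3 {α : Type*} [Preorder α] (x y z : α) : Prop :=
  Incomp x y ∧ Incomp y z ∧ Incomp z x ∧
  ∃ j, IsLUB ({x, y} : Set α) j ∧ IsLUB ({y, z} : Set α) j ∧ IsLUB ({z, x} : Set α) j

/-- `l` is ∨-irreducible: `l` is not the minimum element, and whenever `l` is the join
of `a` and `b`, `l = a` or `l = b`. -/
def JoinIrred {α : Type*} [Preorder α] (l : α) : Prop :=
  (¬ ∀ x, l ≤ x) ∧ ∀ a b, IsLUB ({a, b} : Set α) l → l = a ∨ l = b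

/-- A modular semilattice: (existing joins witness that) every principal ideal is a
(modular) lattice, the modular law holds in every principal ideal, and the join of any
three elements exists whenever the three pairwise joins exist. -/
def ModularSemilattice (α : Type*) [SemilatticeInf α] : Prop :=
  (∀ a b : α, (∃ u, a ≤ u ∧ b ≤ u) → JoinExists a b) ∧
  (∀ x a b c : α, a ≤ x → b ≤ x → c ≤ x → a ≤ c →
    ∀ j, IsLUB ({a, b} : Set α) j → IsLUB ({a, b ⊓ c} : Set α) (j ⊓ c)) ∧
  (∀ x y z : α, JoinExists x y → JoinExists y z → JoinExists z x →
    ∃ j, IsLUB ({x, y, z} : Set α) j)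
/-- A PPIP: a poset (given by `le`) with a symmetric inconsistency relation `ic` and a
symmetric collinearity relation `C` satisfying (IC1), (IC2), (CT1), (CT2), Regularity,
weak Triangle, (CC1) and (CC2). -/
structure IsPPIP (P : Type*) (le : P → P → Prop) (ic : P → P → Prop)
    (C : P → P → P → Prop) : Prop where
  le_refl : ∀ p, le p p
  le_trans : ∀ p q r, le p q → le q r → le p r
  le_antisymm : ∀ p q, le p q → le q p → p = q
  ic_symm : ∀ p q, ic p q → ic q p
  c_symm_left : ∀ p q r, C p q r → C q p r
  c_symm_right : ∀ p q r, C p q r → C p r q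
  ic1 : ∀ p q, ic p q → ¬ ∃ w, le p w ∧ le q w
  ic2 : ∀ p q p' q', ic p q → le p p' → le q q' → ic p' q'
  ct1 : ∀ p q r, C p q r →
    (¬ le p q ∧ ¬ le q p) ∧ (¬ le q r ∧ ¬ le r q) ∧ (¬ le r p ∧ ¬ le p r)
  ct2 : ∀ p q r w, C p q r → le p w → le q w → le r w
  regularity : ∀ p q r r', C p q r → le r' r → ¬ le r' p → ¬ le r' q →
    ∃ p' q', le p' p ∧ le q' q ∧ C p' q' r'
  weak_triangle : ∀ a b c p q, C a c p → C b c q →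
    (∀ u v, u ∈ ({a, b, c, p, q} : Set P) → v ∈ ({a, b, c, p, q} : Set P) → ¬ ic u v) →
    ((∃ x, C a b x ∧ C p q x ∧
        List.Pairwise (fun u v => ¬ le u v ∧ ¬ le v u) [a, b, c, p, q, x] ∧
        (∀ u v w, u ∈ ({a, b, c, p, q, x} : Set P) → v ∈ ({a, b, c, p, q, x} : Set P) →
          w ∈ ({a, b, c, p, q, x} : Set P) → C u v w →
          ({u, v, w} : Multiset P) = {a, c, p} ∨ ({u, v, w} : Multiset P) = {b, c, q} ∨
          ({u, v, w} : Multiset P) = {a, b, x} ∨ ({u, v, w} : Multiset P) = {p, q, x})) ∨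
      (∃ a', le a' a ∧ C b q a') ∨
      C b q p ∨
      (∃ a' p', le a' a ∧ le p' p ∧ C q a' p') ∨
      (le q a ∨ le q p))
  cc1 : ∀ p q r, C p q r → ¬ ic p q ∧ ¬ ic q r ∧ ¬ ic r p
  cc2 : ∀ p q r x, C p q r →
    ((ic x p ∧ ic x q) ∨ (ic x q ∧ ic x r) ∨ (ic x p ∧ ic x r)) ∨
    (¬ ic x p ∧ ¬ ic x q ∧ ¬ ic x r)
/-- The poset of ∨-irreducible elements of `L`. -/
abbrev Irr (L : Type*) [SemilatticeInf L] := {l : L // JoinIrred l}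

/-- `φ(l) = {p ∈ Lⁱʳ : p ≤ l}`. -/
def phiMap (L : Type*) [SemilatticeInf L] (l : L) : Set (Irr L) :=
  {p : Irr L | (p : L) ≤ l}

/-- The induced order on `Lⁱʳ`. -/
def indLE (L : Type*) [SemilatticeInf L] : Irr L → Irr L → Prop :=
  fun p q => p ≤ q

/-- The induced inconsistency relation on `Lⁱʳ`: `p ⌣ q` iff `p ∨ q` does not exist. -/
def indIC (L : Type*) [SemilatticeInf L] : Irr L → Irr L → Prop :=
  fun p q => ¬ JoinExists (p : L) (q : L)

/-- The induced collinearity relation on `Lⁱʳ`. -/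
def indC (L : Type*) [SemilatticeInf L] : Irr L → Irr L → Irr L → Prop :=
  fun p q r => Collinear3 (p : L) (q : L) (r : L)

/-!
Everything rests on one fact: in a modular lattice a ∨-irreducible `r ≤ s ∨ t` lies below `s` or
below `t` as soon as `s ≤ (s ∧ t) ∨ r`. In particular an element `x` minimal subject to
`r ≤ x ∨ y` is again ∨-irreducible, which gives Regularity. For the weak Triangle axiom write
`l = a ∨ c` and `m = b ∨ c`. If `b ≤ l`, then (T4) or (T5) holds; if `c ≤ (a ∧ m) ∨ q`, then (T2)
holds; if neither but `a ≤ m`, then (T3) holds. Otherwise the point `x` of (T1) is a minimal element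
below `(a ∨ b) ∧ (p ∨ q)` with `b ≤ a ∨ x`, and the fact above shows that `x` is collinear both with
`a, b` and with `p, q`.
-/

section Preorder

variable {α : Type*} [Preorder α] {x y z w : α}

theorem JoinExists.symm : JoinExists x y → JoinExists y x := by
  rintro ⟨j, hj⟩
  exact ⟨j, Set.pair_comm x y ▸ hj⟩

theorem Incomp.symm (h : Incomp x y) : Incomp y x := ⟨h.2, h.1⟩

namespace Collinear3

theorem rotate : Collinear3 x y z → Collinear3 y z x := by
  rintro ⟨hxy, hyz, hzx, j, jxy, jyz, jzx⟩
  exact ⟨hyz, hzx, hxy, j, jyz, jzx, jxy⟩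

theorem swap : Collinear3 x y z → Collinear3 y x z := by
  rintro ⟨hxy, hyz, hzx, j, jxy, jyz, jzx⟩
  exact ⟨hxy.symm, hzx.symm, hyz.symm, j, Set.pair_comm x y ▸ jxy, Set.pair_comm z x ▸ jzx,
    Set.pair_comm y z ▸ jyz⟩

theorem joinExists : Collinear3 x y z → JoinExists x y := by
  rintro ⟨-, -, -, j, hj, -, -⟩
  exact ⟨j, hj⟩

theorem le (h : Collinear3 x y z) (hx : x ≤ w) (hy : y ≤ w) : z ≤ w := by
  obtain ⟨-, -, -, j, jxy, jyz, -⟩ := h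
  exact (jyz.1 (by simp)).trans (jxy.2 (by simp [hx, hy]))

end Collinear3

end Preorder

section Quadrilateral

/-- The lines of the complete quadrilateral with vertices `a, b, c, p, q, x`, numbered in this
order. -/
def quadrilateralLine : Fin 4 → Finset (Fin 6) := ![{0, 2, 3}, {1, 2, 4}, {0, 1, 5}, {3, 4, 5}]

variable {α : Type*} [Preorder α] {f : Fin 6 → α} {J : Fin 4 → α} {a b c p q x u v w : α}

theorem not_le_of_quadrilateralLine (hJ : ∀ i t, f i ≤ J t ↔ i ∈ quadrilateralLine t) {i j : Fin 6}
    (hij : i ≠ j) : ¬ f i ≤ f j := by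
  intro hle
  have hsub : ∀ t, j ∈ quadrilateralLine t → i ∈ quadrilateralLine t := fun t hj =>
    (hJ i t).1 (hle.trans ((hJ j t).2 hj))
  clear hle
  revert i j
  decide

theorem exists_quadrilateralLine_eq (hJ : ∀ i t, f i ≤ J t ↔ i ∈ quadrilateralLine t)
    {i j k : Fin 6} (h : Collinear3 (f i) (f j) (f k)) :
    ∃ t, ({i, j, k} : Multiset (Fin 6)) = (quadrilateralLine t).val := by
  have hij : i ≠ j := by rintro rfl; exact h.1.1 le_rfl
  have hjk : j ≠ k := by rintro rfl; exact h.2.1.1 le_rfl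
  have hki : k ≠ i := by rintro rfl; exact h.2.2.1.1 le_rfl
  have closed : ∀ {i j k}, Collinear3 (f i) (f j) (f k) → ∀ t, i ∈ quadrilateralLine t →
      j ∈ quadrilateralLine t → k ∈ quadrilateralLine t := fun h t hi hj =>
    (hJ _ t).1 (h.le ((hJ _ t).2 hi) ((hJ _ t).2 hj))
  have hk := closed h
  have hi := closed h.rotate
  have hj := closed h.rotate.rotate
  clear h closed
  revert i j k
  decide

/-- Alternative (T1) of the weak Triangle axiom for two collinear triples `a, c, p` and `b, c, q`:
the point `x` completes them to a complete quadrilateral. Pairwise incomparability and the absence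
of further collinear triples are encoded by upper bounds of the four lines which lie above no
other vertex. -/
structure IsQuadrilateral (a b c p q x : α) : Prop where
  collinear_abx : Collinear3 a b x
  collinear_pqx : Collinear3 p q x
  exists_incidence : ∃ J : Fin 4 → α, ∀ i t,
    ![a, b, c, p, q, x] i ≤ J t ↔ i ∈ quadrilateralLine t

theorem IsQuadrilateral.pairwise_incomp (h : IsQuadrilateral a b c p q x) :
    [a, b, c, p, q, x].Pairwise Incomp := by
  obtain ⟨J, hJ⟩ := h.exists_incidence
  have hpw : (List.ofFn ![a, b, c, p, q, x]).Pairwise Incomp := List.pairwise_ofFn.2 fun i j hij =>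
    ⟨not_le_of_quadrilateralLine hJ hij.ne, not_le_of_quadrilateralLine hJ hij.ne'⟩
  simpa using hpw

theorem IsQuadrilateral.eq_of_collinear3 (h : IsQuadrilateral a b c p q x)
    (hu : u ∈ ({a, b, c, p, q, x} : Set α)) (hv : v ∈ ({a, b, c, p, q, x} : Set α))
    (hw : w ∈ ({a, b, c, p, q, x} : Set α)) (huvw : Collinear3 u v w) :
    ({u, v, w} : Multiset α) = {a, c, p} ∨ ({u, v, w} : Multiset α) = {b, c, q} ∨
      ({u, v, w} : Multiset α) = {a, b, x} ∨ ({u, v, w} : Multiset α) = {p, q, x} := by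
  obtain ⟨J, hJ⟩ := h.exists_incidence
  set f := ![a, b, c, p, q, x]
  have exists_index : ∀ y ∈ ({a, b, c, p, q, x} : Set α), ∃ i, f i = y := by
    rintro y (rfl | rfl | rfl | rfl | rfl | rfl)
    exacts [⟨0, rfl⟩, ⟨1, rfl⟩, ⟨2, rfl⟩, ⟨3, rfl⟩, ⟨4, rfl⟩, ⟨5, rfl⟩]
  obtain ⟨i, rfl⟩ := exists_index u hu
  obtain ⟨j, rfl⟩ := exists_index v hv
  obtain ⟨k, rfl⟩ := exists_index w hw
  obtain ⟨t, ht⟩ := exists_quadrilateralLine_eq hJ huvw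
  have hmap : ({f i, f j, f k} : Multiset α) = (quadrilateralLine t).val.map f := by
    rw [← ht]
    rfl
  rw [hmap]
  fin_cases t
  exacts [Or.inl rfl, Or.inr (Or.inl rfl), Or.inr (Or.inr (Or.inl rfl)),
    Or.inr (Or.inr (Or.inr rfl))]

/-- The conclusion of the weak Triangle axiom for the ∨-irreducible elements of a poset; the
constructors are the alternatives (T1) to (T5), the last one split in two. -/
inductive WeakTriangle (a b c p q : α) : Prop
  | quadrilateral (x : α) (irr : JoinIrred x) (h : IsQuadrilateral a b c p q x)
  | lower_fst (a' : α) (irr : JoinIrred a') (le : a' ≤ a) (h : Collinear3 b q a')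
  | collinear (h : Collinear3 b q p)
  | lower_both (a' p' : α) (irr_fst : JoinIrred a') (irr_snd : JoinIrred p') (le_fst : a' ≤ a)
      (le_snd : p' ≤ p) (h : Collinear3 q a' p')
  | le_fst (h : q ≤ a)
  | le_snd (h : q ≤ p)

end Quadrilateral

section SemilatticeSup

variable {M : Type*} [SemilatticeSup M]

theorem collinear3_of_le_sup {x y z : M} (hx : x ≤ y ⊔ z) (hy : y ≤ z ⊔ x) (hz : z ≤ x ⊔ y)
    (hxy : ¬ x ≤ y) (hyz : ¬ y ≤ z) (hzx : ¬ z ≤ x) : Collinear3 x y z := by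
  refine ⟨⟨hxy, fun h => hzx (hz.trans (sup_le le_rfl h))⟩,
    ⟨hyz, fun h => hxy (hx.trans (sup_le le_rfl h))⟩,
    ⟨hzx, fun h => hyz (hy.trans (sup_le le_rfl h))⟩, x ⊔ y, isLUB_pair, ?_, ?_⟩
  · rw [le_antisymm (sup_le hx le_sup_left) (sup_le le_sup_right hz)]
    exact isLUB_pair
  · rw [le_antisymm (sup_le le_sup_right hy) (sup_le hz le_sup_left)]
    exact isLUB_pair

theorem sup_lt_of_supIrred {r s t : M} (hr : SupIrred r) (hs : s < r) (ht : t < r) : s ⊔ t < r :=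
  lt_of_le_of_ne (sup_le hs.le ht.le) fun h => (hr.2 h).elim hs.ne ht.ne

/-- A collinear triple of ∨-irreducible elements, the input of the weak Triangle axiom. The middle
point `y` is the one shared by the two lines there. -/
structure IrrLine (x y z : M) : Prop where
  irr_left : SupIrred x
  irr_mid : SupIrred y
  irr_right : SupIrred z
  collinear : Collinear3 x y z

namespace IrrLine

variable {a c p w : M}

theorem reverse (h : IrrLine a c p) : IrrLine p c a :=
  ⟨h.irr_right, h.irr_mid, h.irr_left, h.collinear.rotate.swap⟩

theorem left_le (h : IrrLine a c p) (hc : c ≤ w) (hp : p ≤ w) : a ≤ w :=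
  h.collinear.rotate.le hc hp

theorem mid_le (h : IrrLine a c p) (ha : a ≤ w) (hp : p ≤ w) : c ≤ w :=
  h.collinear.rotate.rotate.le hp ha

theorem right_le (h : IrrLine a c p) (ha : a ≤ w) (hc : c ≤ w) : p ≤ w :=
  h.collinear.le ha hc

end IrrLine

end SemilatticeSup

section Lattice

variable {M : Type*} [Lattice M]

theorem joinIrred_iff_supIrred {x : M} : JoinIrred x ↔ SupIrred x :=
  and_congr (not_congr isBot_iff_isMin)
    ⟨fun h a b hab => (h a b (hab ▸ isLUB_pair)).imp Eq.symm Eq.symm,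
      fun h _ _ hab => (h (isLUB_pair.unique hab)).imp Eq.symm Eq.symm⟩

/-- Two lines `a, c, p` and `b, c, q` spanning a plane. The field `not_mid_le` expresses that the
lines meet in `c` only: otherwise `b`, `q` and some element below `a` would be collinear. -/
structure CrossingLines (a b c p q : M) : Prop where
  line₁ : IrrLine a c p
  line₂ : IrrLine b c q
  not_b_le : ¬ b ≤ a ⊔ c
  not_a_le : ¬ a ≤ b ⊔ c
  not_mid_le : ¬ c ≤ a ⊓ (b ⊔ c) ⊔ q

namespace CrossingLines

variable {a b c p q : M}

theorem p_le (h : CrossingLines a b c p q) : p ≤ a ⊔ c :=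
  h.line₁.right_le le_sup_left le_sup_right

theorem q_le (h : CrossingLines a b c p q) : q ≤ b ⊔ c :=
  h.line₂.right_le le_sup_left le_sup_right

theorem not_p_le (h : CrossingLines a b c p q) : ¬ p ≤ b ⊔ c := fun hle =>
  h.not_a_le (h.line₁.left_le le_sup_right hle)

theorem not_q_le (h : CrossingLines a b c p q) : ¬ q ≤ a ⊔ c := fun hle =>
  h.not_b_le (h.line₂.left_le le_sup_right hle)

end CrossingLines

end Lattice

section Modular

variable {M : Type*} [Lattice M] [IsModularLattice M] {r s t x y z w : M}

theorem le_sup_inf_of_le (hxw : x ≤ w) (h : z ≤ x ⊔ y) (hzw : z ≤ w) : z ≤ x ⊔ y ⊓ w :=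
  (le_inf h hzw).trans (sup_inf_assoc_of_le y hxw).le

theorem le_or_le_of_supIrred_of_le_sup (hr : SupIrred r) (hs : s ≤ s ⊓ t ⊔ r) (h : r ≤ s ⊔ t) :
    r ≤ s ∨ r ≤ t := by
  have hs' : s ≤ s ⊓ t ⊔ r ⊓ s := le_sup_inf_of_le inf_le_left hs le_rfl
  have hrt : r ≤ r ⊓ s ⊔ t :=
    h.trans (sup_le (hs'.trans (sup_le (inf_le_right.trans le_sup_right) le_sup_left)) le_sup_right)
  have hr' : r ⊓ s ⊔ t ⊓ r = r :=
    le_antisymm (sup_le inf_le_left inf_le_right) (le_sup_inf_of_le inf_le_left hrt le_rfl)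
  exact (hr.2 hr').imp inf_eq_left.1 inf_eq_right.1

theorem le_of_supIrred_of_lt_of_le_sup (hr : SupIrred r) (hs : s < r) (h : r ≤ s ⊔ t) : r ≤ t :=
  (le_or_le_of_supIrred_of_le_sup hr (hs.le.trans le_sup_right) h).resolve_left hs.not_ge

theorem le_sup_of_minimal_le_sup (hx : Minimal (fun z => r ≤ z ⊔ y) x) : x ≤ y ⊔ r := by
  have hr : r ≤ x ⊓ (y ⊔ r) ⊔ y := (sup_comm (x ⊓ (y ⊔ r)) y).ge.trans'
    (le_sup_inf_of_le le_sup_left (hx.prop.trans (sup_comm x y).le) le_sup_right)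
  exact (hx.le_of_le hr inf_le_left).trans inf_le_right

theorem supIrred_of_minimal_le_sup (hr : SupIrred r) (hry : ¬ r ≤ y)
    (hx : Minimal (fun z => r ≤ z ⊔ y) x) : SupIrred x := by
  refine ⟨fun hmin => hry (hx.prop.trans (sup_le ((hmin inf_le_left).trans inf_le_right) le_rfl)),
    fun s t hst => ?_⟩
  have hsx : s ≤ x := hst ▸ le_sup_left
  have htx : t ≤ x := hst ▸ le_sup_right
  have hs : s ⊔ y ≤ (s ⊔ y) ⊓ (t ⊔ y) ⊔ r := sup_le
    ((hsx.trans (le_sup_of_minimal_le_sup hx)).trans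
      (sup_le_sup_right (le_inf le_sup_right le_sup_right) r))
    (le_sup_of_le_left (le_inf le_sup_right le_sup_right))
  have hr' : r ≤ (s ⊔ y) ⊔ (t ⊔ y) := by
    rw [← sup_sup_distrib_right, hst]
    exact hx.prop
  exact (le_or_le_of_supIrred_of_le_sup hr hs hr').imp
    (fun h => le_antisymm hsx (hx.le_of_le h hsx)) fun h => le_antisymm htx (hx.le_of_le h htx)

theorem exists_collinear3_of_le_sup [WellFoundedLT M] (hr : SupIrred r) (h : r ≤ x ⊔ y)
    (hx : ¬ r ≤ x) (hy : ¬ r ≤ y) :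
    ∃ p q, SupIrred p ∧ SupIrred q ∧ p ≤ x ∧ q ≤ y ∧ Collinear3 p q r := by
  obtain ⟨p, hpx, hp⟩ := exists_minimal_le_of_wellFoundedLT (fun z => r ≤ z ⊔ y) x h
  obtain ⟨q, hqy, hq⟩ := exists_minimal_le_of_wellFoundedLT (fun z => r ≤ z ⊔ p) y
    (hp.prop.trans (sup_comm p y).le)
  have hrpq : r ≤ p ⊔ q := hq.prop.trans (sup_comm q p).le
  have hp' : Minimal (fun z => r ≤ z ⊔ q) p :=
    ⟨hrpq, fun z hz => hp.le_of_le (hz.trans (sup_le_sup_left hqy z))⟩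
  have hrp : ¬ r ≤ p := fun hle => hx (hle.trans hpx)
  have hrq : ¬ r ≤ q := fun hle => hy (hle.trans hqy)
  have hpq : p ≤ q ⊔ r := le_sup_of_minimal_le_sup hp'
  have hqp : q ≤ p ⊔ r := le_sup_of_minimal_le_sup hq
  refine ⟨p, q, supIrred_of_minimal_le_sup hr hrq hp', supIrred_of_minimal_le_sup hr hrp hq, hpx,
    hqy, collinear3_of_le_sup hpq (hqp.trans (sup_comm p r).le) hrpq ?_ ?_ hrp⟩
  · exact fun hle => hrq (hrpq.trans (sup_le hle le_rfl))
  · intro hle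
    have hsup : p ⊔ q = r := le_antisymm (sup_le (hpq.trans (sup_le hle le_rfl)) hle) hrpq
    exact (hr.2 hsup).elim (fun e => hrp e.ge) fun e => hrq e.ge

namespace IrrLine

variable {a c p d : M}

theorem not_mid_le_sup_of_lt (h : IrrLine a c p) {a₁ c₁ : M} (ha : a₁ < a) (hc : c₁ < c) :
    ¬ c ≤ (c₁ ⊔ p) ⊔ (a₁ ⊔ p) := by
  intro hle
  have hs : c₁ ⊔ p ≤ (c₁ ⊔ p) ⊓ (a₁ ⊔ p) ⊔ c := sup_le (hc.le.trans le_sup_right)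
    (le_sup_of_le_left (le_inf le_sup_right le_sup_right))
  rcases le_or_le_of_supIrred_of_le_sup h.irr_mid hs hle with hle | hle
  · exact h.collinear.2.1.1 (le_of_supIrred_of_lt_of_le_sup h.irr_mid hc hle)
  · exact h.collinear.2.2.1.2
      (le_of_supIrred_of_lt_of_le_sup h.irr_left ha (h.left_le hle le_sup_right))

theorem mid_le_sup_exchange (h : IrrLine a c p) (hd : d < a) (hz : z ≤ c ⊔ d) (hc : c ≤ z ⊔ p) :
    c ≤ z ⊔ a := by
  by_contra hn
  have hc₁ : c ⊓ (z ⊔ a) < c := inf_lt_left.2 hn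
  have hz₁ : z ≤ a ⊔ c ⊓ (z ⊔ a) := le_sup_inf_of_le le_sup_right
    (hz.trans (sup_le le_sup_right (hd.le.trans le_sup_left))) le_sup_left
  have hac : a ⊓ (c ⊔ d) ≤ d ⊔ c ⊓ (z ⊔ a) :=
    (le_sup_inf_of_le hd.le (inf_le_right.trans (sup_comm c d).le) inf_le_left).trans
      (sup_le_sup_left (inf_le_inf_left c le_sup_right) d)
  have hz₂ : z ≤ d ⊔ c ⊓ (z ⊔ a) :=
    (le_sup_inf_of_le (inf_le_left.trans le_sup_left) (hz₁.trans (sup_comm _ _).le) hz).trans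
      (sup_le le_sup_right hac)
  refine h.not_mid_le_sup_of_lt hd hc₁ (hc.trans (sup_le (hz₂.trans (sup_le ?_ ?_)) ?_))
  · exact le_sup_of_le_right le_sup_left
  · exact le_sup_of_le_left le_sup_left
  · exact le_sup_of_le_left le_sup_right

theorem collinear3_of_mid_le_sup (h : IrrLine a c p) (hd : d < a) (hz : z ≤ c ⊔ d)
    (hc : c ≤ z ⊔ p) : Collinear3 a p z := by
  have hca : c ≤ z ⊔ a := h.mid_le_sup_exchange hd hz hc
  have ha : ¬ a ≤ c ⊔ d := fun hle => h.collinear.1.1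
    (le_of_supIrred_of_lt_of_le_sup h.irr_left hd (hle.trans (sup_comm c d).le))
  have hcap : c ≤ a ⊔ p := h.mid_le le_sup_left le_sup_right
  refine (collinear3_of_le_sup (h.left_le (hc.trans (sup_comm z p).le) le_sup_left)
    (h.right_le le_sup_right hca) (hz.trans (sup_le hcap (hd.le.trans le_sup_left)))
    h.collinear.2.2.1.2 ?_ ?_)
  · exact fun hle => ha (h.left_le le_sup_left (hle.trans hz))
  · exact fun hle => h.collinear.1.2 (hca.trans (sup_le hle le_rfl))

end IrrLine

namespace CrossingLines

variable {a b c p q : M}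

theorem reverse (h : CrossingLines a b c p q) : CrossingLines q p c b a where
  line₁ := h.line₂.reverse
  line₂ := h.line₁.reverse
  not_b_le hle := h.not_p_le (hle.trans (sup_le h.q_le le_sup_right))
  not_a_le hle := h.not_q_le (hle.trans (sup_le h.p_le le_sup_right))
  not_mid_le hle := h.not_mid_le <|
    (le_sup_inf_of_le (inf_le_left.trans h.q_le) hle le_sup_right).trans
      (sup_le (inf_le_left.trans le_sup_right) le_sup_left)

theorem swap (h : CrossingLines a b c p q) : CrossingLines b a c q p where
  line₁ := h.line₂
  line₂ := h.line₁
  not_b_le := h.not_a_le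
  not_a_le := h.not_b_le
  not_mid_le hle := by
    have hb : b ⊓ (a ⊔ c) ≤ c ⊔ a ⊓ (b ⊔ c) := le_sup_inf_of_le le_sup_right
      (inf_le_right.trans (sup_comm a c).le) (inf_le_left.trans le_sup_left)
    have hca : c ≤ b ⊓ (a ⊔ c) ⊔ a :=
      h.line₁.mid_le_sup_exchange (inf_lt_left.2 h.not_a_le) hb hle
    have hcb : c ≤ a ⊓ (b ⊔ c) ⊔ b :=
      (le_sup_inf_of_le (inf_le_left.trans le_sup_left) hca le_sup_right).trans
        (sup_le (inf_le_left.trans le_sup_right) le_sup_left)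
    have ha : a ⊓ (b ⊔ c) ≤ c ⊔ q ⊓ (a ⊔ c) := le_sup_inf_of_le le_sup_right
      (inf_le_right.trans (sup_le (h.line₂.left_le le_sup_left le_sup_right) le_sup_left))
      (inf_le_left.trans le_sup_left)
    exact h.not_mid_le
      (h.line₂.reverse.mid_le_sup_exchange (inf_lt_left.2 h.not_q_le) ha hcb)

theorem flip (h : CrossingLines a b c p q) : CrossingLines p q c a b :=
  h.swap.reverse

theorem not_mid_le_sup_of_lt (h : CrossingLines a b c p q) {a₁ : M} (ha₁ : a₁ < a) :
    ¬ c ≤ a₁ ⊔ p ⊔ q := by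
  intro hle
  have ha₂ : a₁ ⊔ a ⊓ (b ⊔ c) < a :=
    sup_lt_of_supIrred h.line₁.irr_left ha₁ (inf_lt_left.2 h.not_a_le)
  have hc₁ : c ⊓ (a ⊓ (b ⊔ c) ⊔ q) < c := inf_lt_left.2 h.not_mid_le
  have hqc : q ⊓ (a ⊔ c) ≤ c ⊔ a ⊓ (b ⊔ c) := le_sup_inf_of_le le_sup_right
    (inf_le_right.trans (sup_comm a c).le) (inf_le_left.trans h.q_le)
  have hq : q ⊓ (a ⊔ c) ≤ a ⊓ (b ⊔ c) ⊔ c ⊓ (a ⊓ (b ⊔ c) ⊔ q) :=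
    le_sup_inf_of_le le_sup_left (hqc.trans (sup_comm _ _).le) (inf_le_left.trans le_sup_right)
  have hc : c ≤ a₁ ⊔ p ⊔ q ⊓ (a ⊔ c) :=
    le_sup_inf_of_le (sup_le (ha₁.le.trans le_sup_left) h.p_le) hle le_sup_right
  refine h.line₁.not_mid_le_sup_of_lt ha₂ hc₁ (hc.trans (sup_le ?_ (hq.trans (sup_le ?_ ?_))))
  · exact le_sup_of_le_right (sup_le_sup_right le_sup_left p)
  · exact le_sup_of_le_right (le_sup_right.trans le_sup_left)
  · exact le_sup_of_le_left le_sup_left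

theorem not_mid_le_sup (h : CrossingLines a b c p q) : ¬ c ≤ p ⊔ q := fun hle =>
  h.not_mid_le_sup_of_lt (inf_lt_left.2 h.not_a_le)
    (hle.trans (sup_le_sup_right le_sup_right q))

theorem q_le_sup_of_b_le_sup (h : CrossingLines a b c p q) (hpq : x ≤ p ⊔ q) (hb : b ≤ a ⊔ x) :
    q ≤ p ⊔ x := by
  have hs : p ⊔ x ≤ (p ⊔ x) ⊓ (a ⊔ c) ⊔ q := by
    have hp : p ≤ (p ⊔ x) ⊓ (a ⊔ c) ⊔ q := le_sup_of_le_left (le_inf le_sup_left h.p_le)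
    exact sup_le hp (hpq.trans (sup_le hp le_sup_right))
  have hq : q ≤ (p ⊔ x) ⊔ (a ⊔ c) := h.line₂.right_le
    (hb.trans (sup_le (le_sup_left.trans le_sup_right) (le_sup_right.trans le_sup_left)))
    (le_sup_right.trans le_sup_right)
  exact (le_or_le_of_supIrred_of_le_sup h.line₂.irr_right hs hq).resolve_right h.not_q_le

theorem a_le_sup_of_b_le_sup (h : CrossingLines a b c p q) (hab : x ≤ a ⊔ b) (hpq : x ≤ p ⊔ q)
    (hb : b ≤ a ⊔ x) : a ≤ b ⊔ x := by
  by_contra hn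
  have ha₁ : a ⊓ (b ⊔ x) < a := inf_lt_left.2 hn
  set n := a ⊓ (b ⊔ x) ⊔ p
  have hnl : n ≤ a ⊔ c := sup_le (ha₁.le.trans le_sup_left) h.p_le
  have hxb : x ≤ n ⊔ b :=
    (le_sup_inf_of_le le_sup_left (hab.trans (sup_comm a b).le) le_sup_right).trans
      (sup_le le_sup_right (le_sup_left.trans le_sup_left))
  have hxq : x ≤ n ⊔ q := hpq.trans (sup_le_sup_right le_sup_right q)
  have hx : x ≤ n ⊔ b ⊓ (n ⊔ q) := le_sup_inf_of_le le_sup_left hxb hxq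
  have hbn : b ≤ n ⊔ q := by
    by_contra hbn
    refine h.not_b_le (le_of_supIrred_of_lt_of_le_sup h.line₂.irr_left (inf_lt_left.2 hbn)
      (hb.trans (sup_le (le_sup_left.trans le_sup_right) (hx.trans ?_))))
    exact sup_le (hnl.trans le_sup_right) le_sup_left
  exact h.not_mid_le_sup_of_lt ha₁ (h.line₂.mid_le hbn le_sup_right)

theorem isQuadrilateral (h : CrossingLines a b c p q) (hab : x ≤ a ⊔ b) (hpq : x ≤ p ⊔ q)
    (hb : b ≤ a ⊔ x) : IsQuadrilateral a b c p q x := by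
  have ha : a ≤ b ⊔ x := h.a_le_sup_of_b_le_sup hab hpq hb
  have hq : q ≤ p ⊔ x := h.q_le_sup_of_b_le_sup hpq hb
  have hp : p ≤ q ⊔ x := h.swap.q_le_sup_of_b_le_sup (hpq.trans (sup_comm p q).le) ha
  have hpl := h.p_le
  have hqm := h.q_le
  have hbl := h.not_b_le
  have hql := h.not_q_le
  have hxl : ¬ x ≤ a ⊔ c := fun hle => hbl (hb.trans (sup_le le_sup_left hle))
  have ham := h.not_a_le
  have hpm := h.not_p_le
  have hxm : ¬ x ≤ b ⊔ c := fun hle => ham (ha.trans (sup_le le_sup_left hle))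
  have hc_ab : ¬ c ≤ a ⊔ b := h.flip.not_mid_le_sup
  have hp_ab : ¬ p ≤ a ⊔ b := fun hle => hc_ab (h.line₁.mid_le le_sup_left hle)
  have hq_ab : ¬ q ≤ a ⊔ b := fun hle => hc_ab (h.line₂.mid_le le_sup_right hle)
  have hc_pq : ¬ c ≤ p ⊔ q := h.not_mid_le_sup
  have ha_pq : ¬ a ≤ p ⊔ q := fun hle => hc_pq (h.line₁.mid_le hle le_sup_left)
  have hb_pq : ¬ b ≤ p ⊔ q := fun hle => hc_pq (h.line₂.mid_le hle le_sup_right)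
  refine ⟨collinear3_of_le_sup ha (hb.trans (sup_comm a x).le) hab ?_ ?_ ?_,
    collinear3_of_le_sup hp (hq.trans (sup_comm p x).le) hpq ?_ ?_ ?_,
    ![a ⊔ c, b ⊔ c, a ⊔ b, p ⊔ q], fun i t => ?_⟩
  · exact fun hle => ham (hle.trans le_sup_left)
  · exact fun hle => hb_pq (hle.trans hpq)
  · exact fun hle => hxl (hle.trans le_sup_left)
  · exact fun hle => hpm (hle.trans hqm)
  · exact fun hle => hq_ab (hle.trans hab)
  · exact fun hle => hxl (hle.trans hpl)
  · fin_cases i <;> fin_cases t <;> simp [quadrilateralLine, *]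

theorem exists_isQuadrilateral [WellFoundedLT M] (h : CrossingLines a b c p q) :
    ∃ x, SupIrred x ∧ IsQuadrilateral a b c p q x := by
  have hb : b ≤ a ⊔ (p ⊔ q) := h.line₂.left_le
    (h.line₁.mid_le le_sup_left (le_sup_left.trans le_sup_right)) (le_sup_right.trans le_sup_right)
  have hb' : b ≤ (p ⊔ q) ⊓ (a ⊔ b) ⊔ a :=
    (le_sup_inf_of_le le_sup_left hb le_sup_right).trans (sup_comm _ _).le
  obtain ⟨x, hx, hmin⟩ := exists_minimal_le_of_wellFoundedLT (fun z => b ≤ z ⊔ a) _ hb'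
  have hba : ¬ b ≤ a := fun hle => h.not_b_le (hle.trans le_sup_left)
  exact ⟨x, supIrred_of_minimal_le_sup h.line₂.irr_left hba hmin,
    h.isQuadrilateral (hx.trans inf_le_right) (hx.trans inf_le_left)
      (hmin.prop.trans (sup_comm x a).le)⟩

end CrossingLines

theorem weakTriangle_of_irrLine [WellFoundedLT M] {a b c p q : M} (h₁ : IrrLine a c p)
    (h₂ : IrrLine b c q) : WeakTriangle a b c p q := by
  by_cases hqa : q ≤ a
  · exact .le_fst hqa
  by_cases hqp : q ≤ p
  · exact .le_snd hqp
  by_cases hq_ap : q ≤ a ⊔ p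
  · obtain ⟨a', p', ha', hp', hle, hle', h⟩ :=
      exists_collinear3_of_le_sup h₂.irr_right hq_ap hqa hqp
    exact .lower_both a' p' (joinIrred_iff_supIrred.2 ha') (joinIrred_iff_supIrred.2 hp') hle hle'
      h.rotate.rotate
  have hb : ¬ b ≤ a ⊔ c := fun hle => hq_ap ((h₂.right_le hle le_sup_right).trans
    (sup_le le_sup_left (h₁.mid_le le_sup_left le_sup_right)))
  have collinear_of_le : ∀ {z}, z ≤ a ⊔ c → z ≤ b ⊔ c → c ≤ z ⊔ q → Collinear3 b q z :=
    fun hzl hzm => h₂.collinear3_of_mid_le_sup (inf_lt_left.2 hb)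
      (le_sup_inf_of_le le_sup_right (hzm.trans (sup_comm b c).le) hzl)
  by_cases hc : c ≤ a ⊓ (b ⊔ c) ⊔ q
  · obtain ⟨a', ha', hmin⟩ := exists_minimal_le_of_wellFoundedLT (fun z => c ≤ z ⊔ q) _ hc
    have irr : SupIrred a' := supIrred_of_minimal_le_sup h₂.irr_mid h₂.collinear.2.1.1 hmin
    have hle : a' ≤ a := ha'.trans inf_le_left
    exact .lower_fst a' (joinIrred_iff_supIrred.2 irr) hle
      (collinear_of_le (hle.trans le_sup_left) (ha'.trans inf_le_right) hmin.prop)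
  by_cases ha : a ≤ b ⊔ c
  · rw [inf_eq_left.2 ha] at hc
    have hs : a ⊔ q ≤ (a ⊔ q) ⊓ (p ⊔ q) ⊔ c :=
      (sup_le ha (h₂.right_le le_sup_left le_sup_right)).trans
        (sup_le (h₂.left_le le_sup_right (le_sup_of_le_left (le_inf le_sup_right le_sup_right)))
          le_sup_right)
    have hcap : c ≤ (a ⊔ q) ⊔ (p ⊔ q) :=
      h₁.mid_le (le_sup_left.trans le_sup_left) (le_sup_left.trans le_sup_right)
    have hcp : c ≤ p ⊔ q := (le_or_le_of_supIrred_of_le_sup h₂.irr_mid hs hcap).resolve_left hc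
    exact .collinear (collinear_of_le (h₁.right_le le_sup_left le_sup_right)
      (h₁.right_le ha le_sup_right) hcp)
  obtain ⟨x, irr, h⟩ := CrossingLines.exists_isQuadrilateral ⟨h₁, h₂, hb, ha, hc⟩
  exact .quadrilateral x (joinIrred_iff_supIrred.2 irr) h

end Modular

section Ideal

variable {L : Type*} [SemilatticeInf L] {u : L}

theorem isLUB_pair_coe_iff {x y j : Set.Iic u} :
    IsLUB ({(x : L), (y : L)} : Set L) (j : L) ↔ IsLUB ({x, y} : Set (Set.Iic u)) j := by
  simp only [isLUB_iff_le_iff, upperBounds_insert, upperBounds_singleton, Set.mem_inter_iff,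
    Set.mem_Ici]
  refine ⟨fun h b => h b, fun h b => ⟨fun hb => ?_, fun hb => ?_⟩⟩
  · have hj := (h j).1 le_rfl
    exact ⟨le_trans hj.1 hb, le_trans hj.2 hb⟩
  · have hj : j ≤ ⟨b ⊓ u, inf_le_right⟩ := (h _).2 ⟨le_inf hb.1 x.2, le_inf hb.2 y.2⟩
    exact le_trans (show (j : L) ≤ b ⊓ u from hj) inf_le_left

theorem collinear3_coe_iff {x y z : Set.Iic u} :
    Collinear3 (x : L) (y : L) (z : L) ↔ Collinear3 x y z := by
  refine and_congr_right' (and_congr_right' (and_congr_right' ⟨?_, ?_⟩))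
  · rintro ⟨j, hxy, hyz, hzx⟩
    have hju : j ≤ u := hxy.2 (by simp [show (x : L) ≤ u from x.2, show (y : L) ≤ u from y.2])
    lift j to Set.Iic u using hju
    exact ⟨j, isLUB_pair_coe_iff.1 hxy, isLUB_pair_coe_iff.1 hyz, isLUB_pair_coe_iff.1 hzx⟩
  · rintro ⟨j, hxy, hyz, hzx⟩
    exact ⟨j, isLUB_pair_coe_iff.2 hxy, isLUB_pair_coe_iff.2 hyz, isLUB_pair_coe_iff.2 hzx⟩

theorem joinIrred_coe_iff {x : Set.Iic u} : JoinIrred (x : L) ↔ JoinIrred x := by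
  refine and_congr (not_congr ⟨fun h y => h y, fun h y => ?_⟩) ⟨fun h a b hab => ?_,
    fun h a b hab => ?_⟩
  · exact le_trans (show (x : L) ≤ y ⊓ u from h ⟨y ⊓ u, inf_le_right⟩) inf_le_left
  · simpa only [Subtype.ext_iff] using h a b (isLUB_pair_coe_iff.2 hab)
  · have ha : a ≤ u := (hab.1 (by simp)).trans x.2
    have hb : b ≤ u := (hab.1 (by simp)).trans x.2
    lift a to Set.Iic u using ha
    lift b to Set.Iic u using hb
    simpa only [Subtype.ext_iff] using h a b (isLUB_pair_coe_iff.1 hab)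

theorem IsQuadrilateral.coe {a b c p q x : Set.Iic u} (h : IsQuadrilateral a b c p q x) :
    IsQuadrilateral (a : L) b c p q x := by
  obtain ⟨J, hJ⟩ := h.exists_incidence
  refine ⟨collinear3_coe_iff.2 h.collinear_abx, collinear3_coe_iff.2 h.collinear_pqx,
    fun t => J t, fun i t => ?_⟩
  rw [← hJ i t]
  fin_cases i <;> rfl

theorem WeakTriangle.coe {a b c p q : Set.Iic u} (h : WeakTriangle a b c p q) :
    WeakTriangle (a : L) b c p q := by
  cases h with
  | quadrilateral x irr h => exact .quadrilateral x (joinIrred_coe_iff.2 irr) h.coe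
  | lower_fst a' irr le h =>
    exact .lower_fst a' (joinIrred_coe_iff.2 irr) le (collinear3_coe_iff.2 h)
  | collinear h => exact .collinear (collinear3_coe_iff.2 h)
  | lower_both a' p' irr_fst irr_snd le_fst le_snd h =>
    exact .lower_both a' p' (joinIrred_coe_iff.2 irr_fst) (joinIrred_coe_iff.2 irr_snd) le_fst
      le_snd (collinear3_coe_iff.2 h)
  | le_fst h => exact .le_fst h
  | le_snd h => exact .le_snd h

end Ideal

namespace ModularSemilattice

variable {L : Type*} [SemilatticeInf L] {a b c p q r x y w : L}

theorem joinExists (hL : ModularSemilattice L) (hx : x ≤ w) (hy : y ≤ w) : JoinExists x y :=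
  hL.1 x y ⟨w, hx, hy⟩

theorem joinExists_of_collinear3 (hL : ModularSemilattice L) (h : Collinear3 p q r)
    (hp : JoinExists x p) (hq : JoinExists x q) : JoinExists x r := by
  obtain ⟨u, hu⟩ := hL.2.2 x p q hp h.joinExists hq.symm
  exact hL.joinExists (hu.1 (by simp)) (h.le (hu.1 (by simp)) (hu.1 (by simp)))

theorem exists_isLUB_Iic (hL : ModularSemilattice L) {u : L} (x y : Set.Iic u) :
    ∃ j : Set.Iic u, IsLUB {x, y} j := by
  obtain ⟨j, hj⟩ := hL.joinExists x.2 y.2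
  have hju : j ≤ u := hj.2 (by simp [show (x : L) ≤ u from x.2, show (y : L) ≤ u from y.2])
  exact ⟨⟨j, hju⟩, isLUB_pair_coe_iff.1 hj⟩

/-- The lattice structure on a principal ideal of a modular semilattice. -/
noncomputable abbrev latticeIic (hL : ModularSemilattice L) (u : L) : Lattice (Set.Iic u) where
  __ := (inferInstance : SemilatticeInf (Set.Iic u))
  __ := SemilatticeSup.ofIsLUB (fun x y => (hL.exists_isLUB_Iic x y).choose)
    fun x y => (hL.exists_isLUB_Iic x y).choose_spec

theorem isModularLattice_Iic (hL : ModularSemilattice L) (u : L) :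
    letI := hL.latticeIic u
    IsModularLattice (Set.Iic u) := by
  let := hL.latticeIic u
  refine ⟨fun {x} y {z} hxz => ?_⟩
  have h : IsLUB {(x : L), (y : L)} ((x ⊔ y : Set.Iic u) : L) := isLUB_pair_coe_iff.2 isLUB_pair
  have h' : IsLUB {x, y ⊓ z} ((x ⊔ y) ⊓ z) :=
    isLUB_pair_coe_iff.1 (hL.2.1 u x y z x.2 y.2 z.2 hxz _ h)
  exact (h'.unique isLUB_pair).le

theorem exists_collinear3_of_le [WellFoundedLT L] (hL : ModularSemilattice L) {r' : L}
    (h : Collinear3 p q r) (hr' : JoinIrred r') (hle : r' ≤ r) (hp : ¬ r' ≤ p) (hq : ¬ r' ≤ q) :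
    ∃ p' q', JoinIrred p' ∧ JoinIrred q' ∧ p' ≤ p ∧ q' ≤ q ∧ Collinear3 p' q' r' := by
  obtain ⟨u, hu⟩ := h.joinExists
  let := hL.latticeIic u
  have := hL.isModularLattice_Iic u
  have hpu : p ≤ u := hu.1 (by simp)
  have hqu : q ≤ u := hu.1 (by simp)
  have hru : r ≤ u := h.le hpu hqu
  lift p to Set.Iic u using hpu
  lift q to Set.Iic u using hqu
  lift r to Set.Iic u using hru
  lift r' to Set.Iic u using hle.trans r.2
  rw [collinear3_coe_iff] at h
  rw [joinIrred_coe_iff, joinIrred_iff_supIrred] at hr'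
  obtain ⟨p', q', hp', hq', hpp, hqq, hC⟩ :=
    exists_collinear3_of_le_sup hr' (le_trans hle (h.le le_sup_left le_sup_right)) hp hq
  exact ⟨p', q', joinIrred_coe_iff.2 (joinIrred_iff_supIrred.2 hp'),
    joinIrred_coe_iff.2 (joinIrred_iff_supIrred.2 hq'), hpp, hqq, collinear3_coe_iff.2 hC⟩

theorem weakTriangle [WellFoundedLT L] (hL : ModularSemilattice L) (ha : JoinIrred a)
    (hb : JoinIrred b) (hc : JoinIrred c) (hp : JoinIrred p) (hq : JoinIrred q)
    (h₁ : Collinear3 a c p) (h₂ : Collinear3 b c q) (hab : JoinExists a b) :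
    WeakTriangle a b c p q := by
  obtain ⟨u, hu⟩ := hL.2.2 a b c hab h₂.joinExists h₁.joinExists.symm
  let := hL.latticeIic u
  have := hL.isModularLattice_Iic u
  have hau : a ≤ u := hu.1 (by simp)
  have hbu : b ≤ u := hu.1 (by simp)
  have hcu : c ≤ u := hu.1 (by simp)
  have hpu : p ≤ u := h₁.le hau hcu
  have hqu : q ≤ u := h₂.le hbu hcu
  lift a to Set.Iic u using hau
  lift b to Set.Iic u using hbu
  lift c to Set.Iic u using hcu
  lift p to Set.Iic u using hpu
  lift q to Set.Iic u using hqu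
  rw [joinIrred_coe_iff, joinIrred_iff_supIrred] at ha hb hc hp hq
  rw [collinear3_coe_iff] at h₁ h₂
  exact (weakTriangle_of_irrLine ⟨ha, hc, hp, h₁⟩ ⟨hb, hc, hq, h₂⟩).coe

end ModularSemilattice

section Irr

variable {L : Type*} [SemilatticeInf L] {a b c p q x u v w : Irr L}

theorem multiset_coe_eq_iff :
    ({(u : L), (v : L), (w : L)} : Multiset L) = {(a : L), (b : L), (c : L)} ↔
      ({u, v, w} : Multiset (Irr L)) = {a, b, c} :=
  (Multiset.map_injective Subtype.val_injective).eq_iff (a := {u, v, w}) (b := {a, b, c})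

theorem IsQuadrilateral.pairwise_not_indLE (h : IsQuadrilateral (a : L) b c p q x) :
    [a, b, c, p, q, x].Pairwise fun u v => ¬ indLE L u v ∧ ¬ indLE L v u :=
  (List.pairwise_map (f := Subtype.val) (l := [a, b, c, p, q, x])).1 h.pairwise_incomp

theorem IsQuadrilateral.eq_of_indC (h : IsQuadrilateral (a : L) b c p q x)
    (hu : u ∈ ({a, b, c, p, q, x} : Set (Irr L))) (hv : v ∈ ({a, b, c, p, q, x} : Set (Irr L)))
    (hw : w ∈ ({a, b, c, p, q, x} : Set (Irr L))) (huvw : indC L u v w) :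
    ({u, v, w} : Multiset (Irr L)) = {a, c, p} ∨ ({u, v, w} : Multiset (Irr L)) = {b, c, q} ∨
      ({u, v, w} : Multiset (Irr L)) = {a, b, x} ∨ ({u, v, w} : Multiset (Irr L)) = {p, q, x} := by
  simp only [← multiset_coe_eq_iff]
  simp only [Set.mem_insert_iff, Set.mem_singleton_iff, Subtype.ext_iff] at hu hv hw
  exact h.eq_of_collinear3 hu hv hw huvw

theorem WeakTriangle.indC_or_indLE (h : WeakTriangle (a : L) b c p q) :
    (∃ x, indC L a b x ∧ indC L p q x ∧
        [a, b, c, p, q, x].Pairwise (fun u v => ¬ indLE L u v ∧ ¬ indLE L v u) ∧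
        ∀ u v w, u ∈ ({a, b, c, p, q, x} : Set (Irr L)) → v ∈ ({a, b, c, p, q, x} : Set (Irr L)) →
          w ∈ ({a, b, c, p, q, x} : Set (Irr L)) → indC L u v w →
          ({u, v, w} : Multiset (Irr L)) = {a, c, p} ∨ ({u, v, w} : Multiset (Irr L)) = {b, c, q} ∨
          ({u, v, w} : Multiset (Irr L)) = {a, b, x} ∨
          ({u, v, w} : Multiset (Irr L)) = {p, q, x}) ∨
      (∃ a', indLE L a' a ∧ indC L b q a') ∨
      indC L b q p ∨
      (∃ a' p', indLE L a' a ∧ indLE L p' p ∧ indC L q a' p') ∨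
      (indLE L q a ∨ indLE L q p) := by
  cases h with
  | quadrilateral x irr h =>
    lift x to Irr L using irr
    exact .inl ⟨x, h.collinear_abx, h.collinear_pqx, h.pairwise_not_indLE,
      fun _ _ _ => h.eq_of_indC⟩
  | lower_fst a' irr le h => exact .inr (.inl ⟨⟨a', irr⟩, le, h⟩)
  | collinear h => exact .inr (.inr (.inl h))
  | lower_both a' p' irr_fst irr_snd le_fst le_snd h =>
    exact .inr (.inr (.inr (.inl ⟨⟨a', irr_fst⟩, ⟨p', irr_snd⟩, le_fst, le_snd, h⟩)))
  | le_fst h => exact .inr (.inr (.inr (.inr (.inl h))))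
  | le_snd h => exact .inr (.inr (.inr (.inr (.inr h))))

end Irr

theorem stmt0_general (L : Type*) [SemilatticeInf L] [WellFoundedLT L]
    (hL : ModularSemilattice L) :
    IsPPIP (Irr L) (indLE L) (indIC L) (indC L) where
  le_refl := le_refl
  le_trans _ _ _ := le_trans
  le_antisymm _ _ := le_antisymm
  ic_symm _ _ := mt JoinExists.symm
  c_symm_left _ _ _ := Collinear3.swap
  c_symm_right _ _ _ h := h.rotate.swap.rotate.rotate
  ic1 _ _ h := fun ⟨_, hp, hq⟩ => h (hL.joinExists hp hq)
  ic2 _ _ _ _ h hp hq := fun ⟨_, hj⟩ =>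
    h (hL.joinExists (le_trans hp (hj.1 (by simp))) (le_trans hq (hj.1 (by simp))))
  ct1 _ _ _ h := ⟨h.1, h.2.1, h.2.2.1⟩
  ct2 _ _ _ _ h := h.le
  regularity _ _ _ r' h hle hp hq := by
    obtain ⟨p', q', hp', hq', hC⟩ := hL.exists_collinear3_of_le h r'.2 hle hp hq
    exact ⟨⟨p', hp'⟩, ⟨q', hq'⟩, hC⟩
  weak_triangle a b c p q h₁ h₂ hic := by
    have hab : JoinExists (a : L) b := not_not.1 (hic a b (by simp) (by simp))
    exact (hL.weakTriangle a.2 b.2 c.2 p.2 q.2 h₁ h₂ hab).indC_or_indLE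
  cc1 _ _ _ h := ⟨not_not.2 h.joinExists, not_not.2 h.rotate.joinExists,
    not_not.2 h.rotate.rotate.joinExists⟩
  cc2 p q r x h := by
    have h' : Collinear3 (p : L) q r := h
    have hr := hL.joinExists_of_collinear3 h' (x := (x : L))
    have hp := hL.joinExists_of_collinear3 h'.rotate (x := (x : L))
    have hq := hL.joinExists_of_collinear3 h'.rotate.rotate (x := (x : L))
    simp only [indIC]
    tauto

/-- For a finite modular semilattice `L`, the poset `Lⁱʳ` of ∨-irreducible elements,
equipped with the induced inconsistency and collinearity relations, is a PPIP. -/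
theorem stmt0 (L : Type*) [SemilatticeInf L] [Fintype L]
    (hL : ModularSemilattice L) :
    IsPPIP (Irr L) (indLE L) (indIC L) (indC L) := by
  exact stmt0_general L hL
end

section
/- Let P be a PPIP. Then Csub(P), the family of consistent subspaces of P ordered by inclusion, is a modular semilattice whose meet is set intersection: it is a finite meet-semilattice in which every principal ideal is a modular lattice, and for all X, Y, Z ∈ Csub(P), if the joins X ∨ Y, Y ∨ Z, Z ∨ X exist in Csub(P) then the join X ∨ Y ∨ Z exists. -/
/-- A consistent subspace: a downward-closed subset, no two of whose elements are
inconsistent, that is closed under the collinearity relation. -/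
def IsCSub {P : Type*} (le : P → P → Prop) (ic : P → P → Prop)
    (C : P → P → P → Prop) (X : Set P) : Prop :=
  (∀ p q, le p q → q ∈ X → p ∈ X) ∧
  (∀ p q, p ∈ X → q ∈ X → ¬ ic p q) ∧
  (∀ p q r, p ∈ X → q ∈ X → C p q r → r ∈ X)
theorem IsCSub.inter {P : Type*} {le ic : P → P → Prop} {C : P → P → P → Prop}
    {X Y : Set P} (hX : IsCSub le ic C X) (hY : IsCSub le ic C Y) :
    IsCSub le ic C (X ∩ Y) :=
  ⟨fun p q h hq => ⟨hX.1 p q h hq.1, hY.1 p q h hq.2⟩,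
   fun p q hp hq => hX.2.1 p q hp.1 hq.1,
   fun p q r hp hq hc => ⟨hX.2.2 p q r hp.1 hq.1 hc, hY.2.2 p q r hp.2 hq.2 hc⟩⟩

/-- The family of consistent subspaces, ordered by inclusion, with meet given by
set intersection. -/
instance CsubSemilatticeInf {P : Type*} (le ic : P → P → Prop) (C : P → P → P → Prop) :
    SemilatticeInf {X : Set P // IsCSub le ic C X} :=
  { (inferInstance : PartialOrder {X : Set P // IsCSub le ic C X}) with
    inf := fun A B => ⟨A.1 ∩ B.1, A.2.inter B.2⟩
    inf_le_left := by
      intro A B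
      exact Set.inter_subset_left
    inf_le_right := by
      intro A B
      exact Set.inter_subset_right
    le_inf := by
      intro A B D h1 h2
      exact Set.subset_inter h1 h2 }

/-!
Consistency passes to the generated subspace, because by (CC2) the elements inconsistent with no
element of a given set form a subspace; so pairwise bounded families have joins.

For the modular law it suffices, given subspaces `X ⊆ Z` and `Y` with `Y ∩ Z ⊆ X`, to find a
subspace containing `X` and `Y` that meets `Z` in `X`. Such a subspace is reached by adding points
of `Y` one at a time to both `X` and `Z`: the join of a subspace `B` with a minimal point `p`
outside it consists of `B`, `p` and the third points of the lines joining `p` to `B`. As in a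
projective space this rests on the Triangle axiom, whose degenerate cases the minimality of `p`
excludes.
-/

theorem exists_minimal_notMem {α : Type*} [Preorder α] [WellFoundedLT α] {X Y : Set α}
    (hY : IsLowerSet Y) (hYX : ¬ Y ⊆ X) : ∃ p ∈ Y, Minimal (· ∉ X) p := by
  obtain ⟨p, hp⟩ := exists_minimal_of_wellFoundedLT (fun p => p ∈ Y ∧ p ∉ X)
    (Set.not_subset.1 hYX)
  exact ⟨p, hp.prop.1, hp.prop.2, fun q hqX hqp => hp.le_of_le ⟨hY hqp hp.prop.1, hqX⟩ hqp⟩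

namespace IsPPIP

section Collinearity

variable {P : Type*} {le ic : P → P → Prop} {C : P → P → P → Prop} {p q r : P}

/-- The order of a PPIP, bundled so that Mathlib's order theory applies to it. -/
abbrev partialOrder (h : IsPPIP P le ic C) : PartialOrder P where
  le := le
  le_refl := h.le_refl
  le_trans := h.le_trans
  le_antisymm := h.le_antisymm

theorem swap₁₂ (h : IsPPIP P le ic C) (hC : C p q r) : C q p r :=
  h.c_symm_left p q r hC

theorem swap₂₃ (h : IsPPIP P le ic C) (hC : C p q r) : C p r q :=
  h.c_symm_right p q r hC

theorem rotate (h : IsPPIP P le ic C) (hC : C p q r) : C q r p :=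
  h.swap₂₃ (h.swap₁₂ hC)

theorem not_le_of_collinear (h : IsPPIP P le ic C) (hC : C p q r) : ¬ le p q :=
  (h.ct1 p q r hC).1.1

end Collinearity

section Cone

variable {P : Type*} {C : P → P → P → Prop} {B : Set P} {b p t : P}

/-- The points of `B`, the apex `p`, and the third points of the lines joining `p` to `B`. It is
the subspace generated by `B` and `p` when `B` is a subspace and `p` is minimal outside `B`. -/
def cone (C : P → P → P → Prop) (B : Set P) (p : P) : Set P :=
  {t | t ∈ B ∨ t = p ∨ ∃ b ∈ B, C b p t}

theorem subset_cone : B ⊆ cone C B p :=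
  fun _ ht => Or.inl ht

theorem apex_mem_cone : p ∈ cone C B p :=
  Or.inr (Or.inl rfl)

theorem mem_cone_of_collinear (hb : b ∈ B) (hC : C b p t) : t ∈ cone C B p :=
  Or.inr (Or.inr ⟨b, hb, hC⟩)

theorem cone_mono {A D : Set P} (hAD : A ⊆ D) : cone C A p ⊆ cone C D p := by
  rintro t (ht | rfl | ⟨b, hb, hC⟩)
  exacts [subset_cone (hAD ht), apex_mem_cone, mem_cone_of_collinear (hAD hb) hC]

end Cone

variable {P : Type*} [PartialOrder P] {ic : P → P → Prop} {C : P → P → P → Prop}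

section Subspace

/-- A subspace, not required to be consistent: a lower set closed under collinearity. Unlike
consistent subspaces, these are closed under arbitrary intersections, the empty one included. -/
structure IsSubspace (C : P → P → P → Prop) (X : Set P) : Prop where
  isLowerSet : IsLowerSet X
  mem_of_collinear : ∀ ⦃p q r⦄, p ∈ X → q ∈ X → C p q r → r ∈ X

theorem _root_.IsCSub.isSubspace {X : Set P} (hX : IsCSub (· ≤ ·) ic C X) : IsSubspace C X :=
  ⟨fun q p hpq hq => hX.1 p q hpq hq, hX.2.2⟩

theorem _root_.IsCSub.not_ic {X : Set P} (hX : IsCSub (· ≤ ·) ic C X) {p q : P} (hp : p ∈ X)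
    (hq : q ∈ X) : ¬ ic p q :=
  hX.2.1 p q hp hq

theorem IsSubspace.isCSub {X : Set P} (hX : IsSubspace C X)
    (hcons : ∀ p ∈ X, ∀ q ∈ X, ¬ ic p q) : IsCSub (· ≤ ·) ic C X :=
  ⟨fun _ _ hpq hq => hX.isLowerSet hpq hq, fun p q hp hq => hcons p hp q hq, hX.mem_of_collinear⟩

theorem IsSubspace.sInter {S : Set (Set P)} (hS : ∀ X ∈ S, IsSubspace C X) :
    IsSubspace C (⋂₀ S) where
  isLowerSet := isLowerSet_sInter fun X hX => (hS X hX).isLowerSet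
  mem_of_collinear _ _ _ hp hq hC X hX := (hS X hX).mem_of_collinear (hp X hX) (hq X hX) hC

theorem IsSubspace.iUnion_of_directed {ι : Sort*} {X : ι → Set P} (hdir : Directed (· ⊆ ·) X)
    (hX : ∀ i, IsSubspace C (X i)) : IsSubspace C (⋃ i, X i) where
  isLowerSet := isLowerSet_iUnion fun i => (hX i).isLowerSet
  mem_of_collinear p q r hp hq hC := by
    obtain ⟨i, hi⟩ := Set.mem_iUnion.1 hp
    obtain ⟨j, hj⟩ := Set.mem_iUnion.1 hq
    obtain ⟨k, hik, hjk⟩ := hdir i j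
    exact Set.mem_iUnion.2 ⟨k, (hX k).mem_of_collinear (hik hi) (hjk hj) hC⟩

/-- The subspace generated by `S`. -/
def span (C : P → P → P → Prop) (S : Set P) : Set P :=
  ⋂₀ {X | IsSubspace C X ∧ S ⊆ X}

theorem isSubspace_span (S : Set P) : IsSubspace C (span C S) :=
  IsSubspace.sInter fun _ hX => hX.1

theorem subset_span (S : Set P) : S ⊆ span C S :=
  Set.subset_sInter fun _ hX => hX.2

theorem span_subset {S X : Set P} (hX : IsSubspace C X) (hSX : S ⊆ X) : span C S ⊆ X :=
  Set.sInter_subset_of_mem ⟨hX, hSX⟩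

theorem isSubspace_setOf_forall_not_ic (h : IsPPIP P (· ≤ ·) ic C) (S : Set P) :
    IsSubspace C {x | ∀ s ∈ S, ¬ ic s x} where
  isLowerSet _ _ hpq hq s hs hsp := hq s hs (h.ic2 _ _ _ _ hsp le_rfl hpq)
  mem_of_collinear p q r hp hq hC s hs hsr := by
    have hsp := hp s hs
    have hsq := hq s hs
    have := h.cc2 p q r s hC
    tauto

theorem isCSub_span (h : IsPPIP P (· ≤ ·) ic C) {S : Set P} (hS : ∀ p ∈ S, ∀ q ∈ S, ¬ ic p q) :
    IsCSub (· ≤ ·) ic C (span C S) := by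
  have hspan : ∀ p ∈ S, ∀ q ∈ span C S, ¬ ic p q := fun p hp q hq =>
    span_subset (h.isSubspace_setOf_forall_not_ic S) (fun q hq p hp => hS p hp q hq) hq p hp
  refine (isSubspace_span S).isCSub fun p hp q hq =>
    span_subset (h.isSubspace_setOf_forall_not_ic (span C S)) ?_ hq p hp
  exact fun q hq p hp hpq => hspan q hq p hp (h.ic_symm p q hpq)

/-- The poset Csub(P) of consistent subspaces, for a PPIP on a partially ordered type `P`. -/
abbrev Csub (ic : P → P → Prop) (C : P → P → P → Prop) : Type _ :=
  {X : Set P // IsCSub (· ≤ ·) ic C X}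

theorem exists_isLUB_of_pairwise_bddAbove (h : IsPPIP P (· ≤ ·) ic C)
    {F : Set (Csub ic C)}
    (hF : F.Pairwise fun X Y => BddAbove {X, Y}) : ∃ J, IsLUB F J := by
  have hcons : ∀ p ∈ ⋃ X ∈ F, X.1, ∀ q ∈ ⋃ X ∈ F, X.1, ¬ ic p q := by
    intro p hp q hq
    obtain ⟨X, hX, hpX⟩ := Set.mem_iUnion₂.1 hp
    obtain ⟨Y, hY, hqY⟩ := Set.mem_iUnion₂.1 hq
    obtain rfl | hXY := eq_or_ne X Y
    · exact X.2.not_ic hpX hqY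
    obtain ⟨U, hU⟩ := hF hX hY hXY
    exact U.2.not_ic (hU (Set.mem_insert _ _) hpX) (hU (Set.mem_insert_of_mem _ rfl) hqY)
  exact ⟨⟨span C (⋃ X ∈ F, X.1), h.isCSub_span hcons⟩,
    fun X hX => (Set.subset_biUnion_of_mem hX).trans (subset_span (C := C) _),
    fun W hW => span_subset W.2.isSubspace (Set.iUnion₂_subset fun X hX => hW hX)⟩

end Subspace

section Triangle

variable {U B : Set P} {a b c p q r s t x : P}

theorem triangle_of_mem (h : IsPPIP P (· ≤ ·) ic C) (hU : IsCSub (· ≤ ·) ic C U)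
    (ha : a ∈ U) (hb : b ∈ U) (hc : c ∈ U) (hacp : C a c p) (hbcq : C b c q) :
    (∃ x, C a b x ∧ C p q x ∧ ¬ a ≤ b ∧ ¬ p ≤ b) ∨ (∃ a' ≤ a, C b q a') ∨ C b q p ∨
      (∃ a' ≤ a, ∃ p' ≤ p, C q a' p') ∨ q ≤ a ∨ q ≤ p := by
  have hp : p ∈ U := hU.isSubspace.mem_of_collinear ha hc hacp
  have hq : q ∈ U := hU.isSubspace.mem_of_collinear hb hc hbcq
  have hsub : ∀ u ∈ ({a, b, c, p, q} : Set P), u ∈ U := by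
    rintro u (rfl | rfl | rfl | rfl | rfl) <;> assumption
  rcases h.weak_triangle a b c p q hacp hbcq
    (fun u v hu hv => hU.not_ic (hsub u hu) (hsub v hv)) with
    ⟨x, habx, hpqx, hincomp, -⟩ | hT2 | hT3 | ⟨a', p', ha', hp', hT4⟩ | hT5
  · simp only [List.pairwise_cons, List.mem_cons] at hincomp
    exact Or.inl ⟨x, habx, hpqx, (hincomp.1 b (by simp)).1, (hincomp.2.1 p (by simp)).2⟩
  · exact Or.inr (Or.inl hT2)
  · exact Or.inr (Or.inr (Or.inl hT3))
  · exact Or.inr (Or.inr (Or.inr (Or.inl ⟨a', ha', p', hp', hT4⟩)))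
  · exact Or.inr (Or.inr (Or.inr (Or.inr hT5)))

theorem eq_of_collinear_of_le (h : IsPPIP P (· ≤ ·) ic C) (hU : IsCSub (· ≤ ·) ic C U)
    (hb : b ∈ U) (hc : c ∈ U) (hacp : C a c p) (hbcq : C b c q) (hab : a ≤ b) (hpq : p ≤ q) :
    p = q := by
  have hqb : ¬ q ≤ b := h.not_le_of_collinear (h.rotate (h.rotate hbcq))
  rcases h.triangle_of_mem hU (hU.isSubspace.isLowerSet hab hb) hb hc hacp hbcq with
    ⟨x, -, -, hnab, -⟩ | ⟨a', ha', hC⟩ | hC | ⟨a', -, p', hp', hC⟩ | hqa | hqp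
  · exact absurd hab hnab
  · exact absurd (ha'.trans hab) (h.not_le_of_collinear (h.rotate (h.rotate hC)))
  · exact absurd hpq (h.not_le_of_collinear (h.swap₁₂ (h.rotate hC)))
  · exact absurd (hp'.trans hpq) (h.not_le_of_collinear (h.rotate (h.rotate hC)))
  · exact absurd (hqa.trans hab) hqb
  · exact hpq.antisymm hqp

theorem minimal_notMem_of_collinear (h : IsPPIP P (· ≤ ·) ic C) (hU : IsCSub (· ≤ ·) ic C U)
    (hB : IsSubspace C B) (hBU : B ⊆ U) (hr : r ∈ B) (hsU : s ∈ U) (hs : Minimal (· ∉ B) s)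
    (hC : C r s t) : Minimal (· ∉ B) t := by
  refine ⟨fun ht => hs.prop (hB.mem_of_collinear hr ht (h.swap₂₃ hC)), fun t' ht' ht't => ?_⟩
  have ht'r : ¬ t' ≤ r := fun hle => ht' (hB.isLowerSet hle hr)
  have ht's : ¬ t' ≤ s := fun hle => by
    obtain rfl := hs.eq_of_le ht' hle
    exact h.not_le_of_collinear (h.rotate hC) ht't
  obtain ⟨r', s', hr', hs', hC'⟩ := h.regularity _ _ _ _ hC ht't ht'r ht's
  have hs'B : s' ∉ B := fun hs'B =>
    ht' (hB.mem_of_collinear (hB.isLowerSet hr' hr) hs'B hC')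
  obtain rfl : s' = s := hs.eq_of_le hs'B hs'
  exact (h.eq_of_collinear_of_le hU (hBU hr) hsU hC' hC hr' ht't).ge

theorem IsSubspace.cone_subset {X : Set P} (hX : IsSubspace C X) (hBX : B ⊆ X) (hp : p ∈ X) :
    cone C B p ⊆ X := by
  rintro t (ht | rfl | ⟨b, hb, hC⟩)
  exacts [hBX ht, hp, hX.mem_of_collinear (hBX hb) hp hC]

theorem minimal_notMem_of_mem_cone (h : IsPPIP P (· ≤ ·) ic C) (hU : IsCSub (· ≤ ·) ic C U)
    (hB : IsSubspace C B) (hBU : B ⊆ U) (hpU : p ∈ U) (hp : Minimal (· ∉ B) p)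
    (hs : s ∈ cone C B p) (hsB : s ∉ B) : Minimal (· ∉ B) s := by
  rcases hs with hs | rfl | ⟨x, hx, hC⟩
  exacts [absurd hs hsB, hp, h.minimal_notMem_of_collinear hU hB hBU hx hpU hp hC]

theorem mem_cone_of_collinear_base (h : IsPPIP P (· ≤ ·) ic C) (hU : IsCSub (· ≤ ·) ic C U)
    (hB : IsSubspace C B) (hBU : B ⊆ U) (hpU : p ∈ U) (hp : Minimal (· ∉ B) p) (hr : r ∈ B)
    (hs : s ∈ cone C B p) (hC : C r s t) : t ∈ cone C B p := by
  by_cases hsB : s ∈ B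
  · exact subset_cone (hB.mem_of_collinear hr hsB hC)
  have hsU : s ∈ U := hU.isSubspace.cone_subset hBU hpU hs
  have ht : Minimal (· ∉ B) t := h.minimal_notMem_of_collinear hU hB hBU hr hsU
    (h.minimal_notMem_of_mem_cone hU hB hBU hpU hp hs hsB) hC
  rcases hs with hs | rfl | ⟨x, hx, hxps⟩
  · exact absurd hs hsB
  · exact mem_cone_of_collinear hr hC
  rcases h.triangle_of_mem hU (hBU hr) (hBU hx) hsU hC (h.swap₂₃ hxps) with
    ⟨y, hrxy, htpy, -, -⟩ | ⟨r', hr', hC'⟩ | hxpt | ⟨r', hr', t', ht't, hC'⟩ | hpr | hpt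
  · exact mem_cone_of_collinear (hB.mem_of_collinear hr hx hrxy)
      (h.swap₁₂ (h.rotate htpy))
  · exact absurd (hB.mem_of_collinear hx (hB.isLowerSet hr' hr) (h.swap₂₃ hC')) hp.prop
  · exact mem_cone_of_collinear hx hxpt
  · have hr'B : r' ∈ B := hB.isLowerSet hr' hr
    have ht'B : t' ∉ B := fun ht'B =>
      hp.prop (hB.mem_of_collinear hr'B ht'B (h.rotate hC'))
    obtain rfl : t' = t := ht.eq_of_le ht'B ht't
    exact mem_cone_of_collinear hr'B (h.swap₁₂ hC')
  · exact absurd (hB.isLowerSet hpr hr) hp.prop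
  · obtain rfl : p = t := ht.eq_of_le hp.prop hpt
    exact apex_mem_cone

theorem mem_cone_of_collinear_apex (h : IsPPIP P (· ≤ ·) ic C) (hU : IsCSub (· ≤ ·) ic C U)
    (hB : IsSubspace C B) (hBU : B ⊆ U) (hpU : p ∈ U) (hp : Minimal (· ∉ B) p) (hx : x ∈ B)
    (hxps : C x p s) (hC : C p s t) : t ∈ cone C B p := by
  by_cases htB : t ∈ B
  · exact subset_cone htB
  have hs : s ∈ cone C B p := mem_cone_of_collinear hx hxps
  have hsmin : Minimal (· ∉ B) s := h.minimal_notMem_of_collinear hU hB hBU hx hpU hp hxps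
  have mem_of_le {y : P} (hy : y ≤ x) (hyst : C y s t) : t ∈ cone C B p :=
    h.mem_cone_of_collinear_base hU hB hBU hpU hp (hB.isLowerSet hy hx) hs hyst
  have hsU : s ∈ U := hU.isSubspace.cone_subset hBU hpU hs
  rcases h.triangle_of_mem hU (hBU hx) hsU hpU hxps (h.swap₁₂ hC) with
    ⟨-, -, -, -, hss⟩ | ⟨x', hx', hC'⟩ | hsts | ⟨x', hx', s', hs', hC'⟩ | htx | hts
  · exact absurd le_rfl hss
  · exact mem_of_le hx' (h.rotate (h.rotate hC'))
  · exact absurd le_rfl (h.not_le_of_collinear (h.swap₂₃ hsts))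
  · have hs'B : s' ∉ B := fun hs'B =>
      htB (hB.mem_of_collinear (hB.isLowerSet hx' hx) hs'B (h.rotate hC'))
    obtain rfl : s' = s := hsmin.eq_of_le hs'B hs'
    exact mem_of_le hx' (h.rotate hC')
  · exact absurd (hB.isLowerSet htx hx) htB
  · exact absurd hts (h.not_le_of_collinear (h.swap₁₂ (h.rotate hC)))

theorem cone_subset_cone_of_collinear (h : IsPPIP P (· ≤ ·) ic C)
    (hU : IsCSub (· ≤ ·) ic C U) (hB : IsSubspace C B) (hBU : B ⊆ U) (hsU : s ∈ U)
    (hs : Minimal (· ∉ B) s) (hx : x ∈ B) (hC : C x p s) : cone C B p ⊆ cone C B s := by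
  have hp : p ∈ cone C B s := mem_cone_of_collinear hx (h.swap₂₃ hC)
  rintro t (ht | rfl | ⟨b, hb, hbpt⟩)
  exacts [subset_cone ht, hp, h.mem_cone_of_collinear_base hU hB hBU hsU hs hb hp hbpt]

theorem cone_eq_of_mem (h : IsPPIP P (· ≤ ·) ic C) (hU : IsCSub (· ≤ ·) ic C U)
    (hB : IsSubspace C B) (hBU : B ⊆ U) (hpU : p ∈ U) (hp : Minimal (· ∉ B) p)
    (hs : s ∈ cone C B p) (hsB : s ∉ B) : cone C B s = cone C B p := by
  have hsU : s ∈ U := hU.isSubspace.cone_subset hBU hpU hs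
  have hsmin := h.minimal_notMem_of_mem_cone hU hB hBU hpU hp hs hsB
  rcases hs with hs | rfl | ⟨x, hx, hC⟩
  · exact absurd hs hsB
  · rfl
  · exact (h.cone_subset_cone_of_collinear hU hB hBU hpU hp hx (h.swap₂₃ hC)).antisymm
      (h.cone_subset_cone_of_collinear hU hB hBU hsU hsmin hx hC)

theorem isSubspace_cone (h : IsPPIP P (· ≤ ·) ic C) (hU : IsCSub (· ≤ ·) ic C U)
    (hB : IsSubspace C B) (hBU : B ⊆ U) (hpU : p ∈ U) (hp : Minimal (· ∉ B) p) :
    IsSubspace C (cone C B p) where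
  isLowerSet s q hqs hs := by
    by_cases hqB : q ∈ B
    · exact subset_cone hqB
    have hsB : s ∉ B := fun hsB => hqB (hB.isLowerSet hqs hsB)
    rwa [(h.minimal_notMem_of_mem_cone hU hB hBU hpU hp hs hsB).eq_of_le hqB hqs]
  mem_of_collinear r s t hr hs hC := by
    by_cases hrB : r ∈ B
    · exact h.mem_cone_of_collinear_base hU hB hBU hpU hp hrB hs hC
    have hrU : r ∈ U := hU.isSubspace.cone_subset hBU hpU hr
    have hrmin := h.minimal_notMem_of_mem_cone hU hB hBU hpU hp hr hrB
    -- The cone has `r` as an apex, too.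
    rw [← h.cone_eq_of_mem hU hB hBU hpU hp hr hrB] at hs ⊢
    rcases hs with hs | rfl | ⟨x, hx, hxrs⟩
    · exact h.mem_cone_of_collinear_base hU hB hBU hrU hrmin hs apex_mem_cone (h.swap₁₂ hC)
    · exact absurd le_rfl (h.not_le_of_collinear hC)
    · exact h.mem_cone_of_collinear_apex hU hB hBU hrU hrmin hx hxrs hC

theorem inter_cone_subset_cone (h : IsPPIP P (· ≤ ·) ic C) {A D Y : Set P}
    (hY : IsSubspace C Y) (hYD : Y ∩ D ⊆ A) (hp : p ∈ Y) : Y ∩ cone C D p ⊆ cone C A p := by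
  rintro t ⟨htY, ht | rfl | ⟨b, hb, hC⟩⟩
  · exact subset_cone (hYD ⟨htY, ht⟩)
  · exact apex_mem_cone
  · exact mem_cone_of_collinear (hYD ⟨hY.mem_of_collinear hp htY (h.rotate hC), hb⟩) hC

theorem cone_inter_subset (h : IsPPIP P (· ≤ ·) ic C) {A D : Set P} (hD : IsSubspace C D)
    (hAD : A ⊆ D) (hp : p ∉ D) : cone C A p ∩ D ⊆ A := by
  rintro t ⟨ht | rfl | ⟨b, hb, hC⟩, htD⟩
  · exact ht
  · exact absurd htD hp
  · exact absurd (hD.mem_of_collinear (hAD hb) htD (h.swap₂₃ hC)) hp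

end Triangle

section Modularity

/-- A pair of subspaces `A ⊆ D` of `U` extending a pair `X ⊆ Z`, such that `A` meets `Z` in `X`
and `Y` meets `D` inside `A`. When `Y ⊆ A`, the subspace `A` shows that the join of `X` and `Y`
meets `Z` in `X`. -/
structure IsSeparatingPair (C : P → P → P → Prop) (U X Y Z A D : Set P) : Prop where
  isSubspace_left : IsSubspace C A
  isSubspace_right : IsSubspace C D
  left_subset_right : A ⊆ D
  right_subset : D ⊆ U
  subset_right : Z ⊆ D
  left_inter_eq : A ∩ Z = X
  inter_right_subset : Y ∩ D ⊆ A

variable {U X Y Z : Set P}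

theorem IsSeparatingPair.iUnion_of_directed {ι : Sort*} [Nonempty ι] {A D : ι → Set P}
    (hA : Directed (· ⊆ ·) A) (hD : Directed (· ⊆ ·) D)
    (hAD : ∀ i, IsSeparatingPair C U X Y Z (A i) (D i)) :
    IsSeparatingPair C U X Y Z (⋃ i, A i) (⋃ i, D i) where
  isSubspace_left := .iUnion_of_directed hA fun i => (hAD i).isSubspace_left
  isSubspace_right := .iUnion_of_directed hD fun i => (hAD i).isSubspace_right
  left_subset_right := Set.iUnion_mono fun i => (hAD i).left_subset_right
  right_subset := Set.iUnion_subset fun i => (hAD i).right_subset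
  subset_right :=
    (hAD (Classical.arbitrary ι)).subset_right.trans (Set.subset_iUnion D _)
  left_inter_eq := by
    simp only [Set.iUnion_inter, fun i => (hAD i).left_inter_eq, Set.iUnion_const]
  inter_right_subset := by
    rw [Set.inter_iUnion]
    exact Set.iUnion_mono fun i => (hAD i).inter_right_subset

theorem IsSeparatingPair.exists_maximal {A D : Set P} (hAD : IsSeparatingPair C U X Y Z A D) :
    ∃ Q : Set P × Set P, Maximal (fun Q => IsSeparatingPair C U X Y Z Q.1 Q.2) Q := by
  have hchain : ∀ c ⊆ {Q : Set P × Set P | IsSeparatingPair C U X Y Z Q.1 Q.2},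
      IsChain (· ≤ ·) c → ∀ R ∈ c,
        ∃ B ∈ {Q : Set P × Set P | IsSeparatingPair C U X Y Z Q.1 Q.2}, ∀ Q ∈ c, Q ≤ B := by
    intro c hc hchain R hR
    have : Nonempty c := ⟨⟨R, hR⟩⟩
    have hdir : Directed (· ≤ ·) (Subtype.val : c → Set P × Set P) := hchain.directed
    refine ⟨(⋃ Q : c, Q.1.1, ⋃ Q : c, Q.1.2), ?_, fun Q hQ =>
      ⟨Set.subset_iUnion (fun Q : c => Q.1.1) ⟨Q, hQ⟩,
        Set.subset_iUnion (fun Q : c => Q.1.2) ⟨Q, hQ⟩⟩⟩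
    exact .iUnion_of_directed (hdir.mono_comp _ fun _ _ hle => hle.1)
      (hdir.mono_comp _ fun _ _ hle => hle.2) fun Q => hc Q.2
  obtain ⟨Q, -, hQ⟩ := zorn_le_nonempty₀ _ hchain (A, D) hAD
  exact ⟨Q, hQ⟩

theorem IsSeparatingPair.cone (h : IsPPIP P (· ≤ ·) ic C) (hU : IsCSub (· ≤ ·) ic C U)
    (hY : IsSubspace C Y) (hYU : Y ⊆ U) {A D : Set P}
    (hAD : IsSeparatingPair C U X Y Z A D) {p : P} (hpY : p ∈ Y) (hp : Minimal (· ∉ A) p) :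
    IsSeparatingPair C U X Y Z (cone C A p) (cone C D p) := by
  have hpU : p ∈ U := hYU hpY
  have hpD : p ∉ D := fun hpD => hp.prop (hAD.inter_right_subset ⟨hpY, hpD⟩)
  have hpDmin : Minimal (· ∉ D) p :=
    hp.mono (fun _ hqD hqA => hqD (hAD.left_subset_right hqA)) hpD
  exact
    { isSubspace_left := h.isSubspace_cone hU hAD.isSubspace_left
        (hAD.left_subset_right.trans hAD.right_subset) hpU hp
      isSubspace_right := h.isSubspace_cone hU hAD.isSubspace_right hAD.right_subset hpU hpDmin
      left_subset_right := cone_mono hAD.left_subset_right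
      right_subset := hU.isSubspace.cone_subset hAD.right_subset hpU
      subset_right := hAD.subset_right.trans subset_cone
      left_inter_eq := by
        refine Set.Subset.antisymm (fun t ht => ?_) ?_
        · rw [← hAD.left_inter_eq]
          exact ⟨h.cone_inter_subset hAD.isSubspace_right hAD.left_subset_right hpD
            ⟨ht.1, hAD.subset_right ht.2⟩, ht.2⟩
        · rw [← hAD.left_inter_eq]
          exact Set.inter_subset_inter_left Z subset_cone
      inter_right_subset := h.inter_cone_subset_cone hY hAD.inter_right_subset hpY }

theorem exists_isCSub_inter_eq [WellFoundedLT P] (h : IsPPIP P (· ≤ ·) ic C)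
    (hU : IsCSub (· ≤ ·) ic C U) (hX : IsSubspace C X) (hY : IsSubspace C Y)
    (hZ : IsSubspace C Z) (hXZ : X ⊆ Z) (hYU : Y ⊆ U) (hZU : Z ⊆ U) (hYZ : Y ∩ Z ⊆ X) :
    ∃ W, IsCSub (· ≤ ·) ic C W ∧ Y ⊆ W ∧ W ∩ Z = X := by
  have hXZ' : IsSeparatingPair C U X Y Z X Z :=
    ⟨hX, hZ, hXZ, hZU, subset_rfl, Set.inter_eq_left.2 hXZ, hYZ⟩
  obtain ⟨⟨A, D⟩, hmax⟩ := hXZ'.exists_maximal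
  have hAD : IsSeparatingPair C U X Y Z A D := hmax.prop
  have hAU : A ⊆ U := hAD.left_subset_right.trans hAD.right_subset
  refine ⟨A, hAD.isSubspace_left.isCSub fun p hp q hq => hU.not_ic (hAU hp) (hAU hq),
    not_not.1 fun hYA => ?_, hAD.left_inter_eq⟩
  obtain ⟨p, hpY, hp⟩ := exists_minimal_notMem hY.isLowerSet hYA
  have hle : (cone C A p, cone C D p) ≤ (A, D) :=
    hmax.le_of_ge (hAD.cone h hU hY hYU hpY hp) ⟨subset_cone, subset_cone⟩
  exact hp.prop (hle.1 apex_mem_cone)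

theorem isLUB_inf_of_le [WellFoundedLT P] (h : IsPPIP P (· ≤ ·) ic C)
    {u a b c j : Csub ic C} (hbu : b ≤ u) (hcu : c ≤ u)
    (hac : a ≤ c) (hj : IsLUB {a, b} j) : IsLUB {a, b ⊓ c} (j ⊓ c) := by
  have haj : a ≤ j := hj.1 (Set.mem_insert _ _)
  have hbj : b ≤ j := hj.1 (Set.mem_insert_of_mem _ rfl)
  refine ⟨?_, fun w hw => ?_⟩
  · rintro v (rfl | rfl)
    exacts [le_inf haj hac, inf_le_inf_right c hbj]
  have haw : a ≤ w := hw (Set.mem_insert _ _)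
  have hbcw : b ⊓ c ≤ w := hw (Set.mem_insert_of_mem _ rfl)
  obtain ⟨W, hW, hbW, hWc⟩ := h.exists_isCSub_inter_eq u.2 (w.2.inter c.2).isSubspace
    b.2.isSubspace c.2.isSubspace Set.inter_subset_right hbu hcu
    (Set.subset_inter hbcw Set.inter_subset_right)
  have haW : a.1 ⊆ W := fun t ht => (hWc.ge ⟨haw ht, hac ht⟩).1
  have hjW : j ≤ ⟨W, hW⟩ := hj.2 (by rintro v (rfl | rfl) <;> assumption)
  exact fun t ht => (hWc.le ⟨hjW ht.1, ht.2⟩).1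

theorem modularSemilattice [WellFoundedLT P] (h : IsPPIP P (· ≤ ·) ic C) :
    ModularSemilattice (Csub ic C) := by
  refine ⟨fun a b ⟨u, hau, hbu⟩ => ?_, fun u a b c _ hbu hcu hac j hj =>
    h.isLUB_inf_of_le hbu hcu hac hj, fun x y z hxy hyz hzx => ?_⟩
  · have hab : BddAbove {a, b} := ⟨u, by simp [hau, hbu]⟩
    refine h.exists_isLUB_of_pairwise_bddAbove ?_
    exact Set.pairwise_pair.2 fun _ => ⟨hab, Set.pair_comm a b ▸ hab⟩
  · have bdd {v w : Csub ic C} (hvw : JoinExists v w) :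
        BddAbove {v, w} ∧ BddAbove {w, v} := by
      obtain ⟨j, hj⟩ := hvw
      exact ⟨⟨j, hj.1⟩, Set.pair_comm v w ▸ ⟨j, hj.1⟩⟩
    refine h.exists_isLUB_of_pairwise_bddAbove ?_
    rw [Set.pairwise_insert, Set.pairwise_pair]
    refine ⟨fun _ => bdd hyz, ?_⟩
    rintro w (rfl | rfl) -
    exacts [bdd hxy, (bdd hzx).symm]

end Modularity

end IsPPIP

theorem stmt2_general (P : Type*) (le ic : P → P → Prop) (C : P → P → P → Prop)
    (h : IsPPIP P le ic C) (hwf : WellFounded fun p q => le p q ∧ ¬ le q p) :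
    ModularSemilattice {X : Set P // IsCSub le ic C X} ∧
    (∀ A B : {X : Set P // IsCSub le ic C X},
      ((A ⊓ B : {X : Set P // IsCSub le ic C X}) : Set P) = (A : Set P) ∩ (B : Set P)) := by
  let _ : PartialOrder P := h.partialOrder
  have : WellFoundedLT P := ⟨hwf⟩
  exact ⟨IsPPIP.modularSemilattice h, fun _ _ => rfl⟩

/-- For a PPIP `P`, the family of consistent subspaces of `P`, ordered by inclusion,
is a finite modular semilattice whose meet is set intersection. -/
theorem stmt2 (P : Type*) [Fintype P] (le ic : P → P → Prop) (C : P → P → P → Prop)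
    (h : IsPPIP P le ic C) :
    Finite {X : Set P // IsCSub le ic C X} ∧
    ModularSemilattice {X : Set P // IsCSub le ic C X} ∧
    (∀ A B : {X : Set P // IsCSub le ic C X},
      ((A ⊓ B : {X : Set P // IsCSub le ic C X}) : Set P) = (A : Set P) ∩ (B : Set P)) := by
  exact ⟨inferInstance, stmt2_general P le ic C h (@wellFounded_lt P h.partialOrder.toLT _)⟩
end

section
/- Let P be a PPIP and X a consistent subset of P. Then there exists a consistent subspace S ∈ Csub(P) with X ⊆ S. -/
/-!
By Zorn's lemma a consistent set extends to a maximal one. By maximality, such a set contains every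
element that is consistent with all of its members, and this property passes down the order by (IC2)
and from two points of a collinear triple to the third by (CC2).
-/

/-- A consistent set: no two of its elements, equal or distinct, are inconsistent. These are the
candidates to be extended to consistent subspaces. -/
def IsConsistent {P : Type*} (ic : P → P → Prop) (X : Set P) : Prop :=
  ∀ p q, p ∈ X → q ∈ X → ¬ ic p q

namespace IsConsistent

variable {P : Type*} {ic : P → P → Prop} {S X : Set P} {r : P}

theorem sUnion {c : Set (Set P)} (hc : DirectedOn (· ⊆ ·) c) (h : ∀ X ∈ c, IsConsistent ic X) :
    IsConsistent ic (⋃₀ c) := by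
  rintro p q ⟨X, hX, hp⟩ ⟨Y, hY, hq⟩
  obtain ⟨Z, hZ, hXZ, hYZ⟩ := hc X hX Y hY
  exact h Z hZ p q (hXZ hp) (hYZ hq)

theorem exists_maximal_superset (hX : IsConsistent ic X) :
    ∃ S, X ⊆ S ∧ Maximal (IsConsistent ic) S :=
  zorn_subset_nonempty {S | IsConsistent ic S}
    (fun c hc hchain _ ↦ ⟨⋃₀ c, sUnion hchain.directedOn hc, fun _ ↦ Set.subset_sUnion_of_mem⟩)
    X hX

theorem insert (hirrefl : ∀ p, ¬ ic p p) (hsymm : ∀ p q, ic p q → ic q p)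
    (hS : IsConsistent ic S) (hr : ∀ x ∈ S, ¬ ic x r) : IsConsistent ic (insert r S) := by
  rintro p q (rfl | hp) (rfl | hq) hpq
  · exact hirrefl _ hpq
  · exact hr q hq (hsymm _ _ hpq)
  · exact hr p hp hpq
  · exact hS p q hp hq hpq

theorem mem_iff_of_maximal (hirrefl : ∀ p, ¬ ic p p) (hsymm : ∀ p q, ic p q → ic q p)
    (hS : Maximal (IsConsistent ic) S) : r ∈ S ↔ ∀ x ∈ S, ¬ ic x r where
  mp hr x hx := hS.prop x r hx hr
  mpr hr := hS.mem_of_prop_insert (hS.prop.insert hirrefl hsymm hr)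

theorem isCSub_of_maximal {le : P → P → Prop} {C : P → P → P → Prop}
    (hirrefl : ∀ p, ¬ ic p p) (hsymm : ∀ p q, ic p q → ic q p)
    (hle : ∀ x p q, ic x p → le p q → ic x q)
    (hC : ∀ x p q r, C p q r → ic x r → ic x p ∨ ic x q)
    (hS : Maximal (IsConsistent ic) S) : IsCSub le ic C S := by
  have mem_iff {r : P} : r ∈ S ↔ ∀ x ∈ S, ¬ ic x r := mem_iff_of_maximal hirrefl hsymm hS
  refine ⟨fun p q hpq hq ↦ ?downward, hS.prop, fun p q r hp hq hpqr ↦ ?collinear⟩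
  case downward =>
    exact mem_iff.2 fun x hx hxp ↦ mem_iff.1 hq x hx (hle x p q hxp hpq)
  case collinear =>
    exact mem_iff.2 fun x hx hxr ↦
      (hC x p q r hpqr hxr).elim (mem_iff.1 hp x hx) (mem_iff.1 hq x hx)

end IsConsistent

namespace IsPPIP

variable {P : Type*} {le ic : P → P → Prop} {C : P → P → P → Prop}

theorem not_ic_self (h : IsPPIP P le ic C) (p : P) : ¬ ic p p :=
  fun hp ↦ h.ic1 p p hp ⟨p, h.le_refl p, h.le_refl p⟩

theorem ic_of_ic_of_le (h : IsPPIP P le ic C) (x p q : P) (hxp : ic x p) (hpq : le p q) : ic x q :=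
  h.ic2 x p x q hxp (h.le_refl x) hpq

theorem ic_or_ic_of_collinear (h : IsPPIP P le ic C) (x p q r : P) (hpqr : C p q r)
    (hxr : ic x r) : ic x p ∨ ic x q := by
  rcases h.cc2 p q r x hpqr with (⟨hxp, -⟩ | ⟨hxq, -⟩ | ⟨hxp, -⟩) | ⟨-, -, hxr'⟩
  exacts [.inl hxp, .inr hxq, .inl hxp, absurd hxr hxr']

end IsPPIP

theorem stmt4_general {P : Type*} {le ic : P → P → Prop} {C : P → P → P → Prop}
    (hirrefl : ∀ p, ¬ ic p p) (hsymm : ∀ p q, ic p q → ic q p)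
    (hle : ∀ x p q, ic x p → le p q → ic x q)
    (hC : ∀ x p q r, C p q r → ic x r → ic x p ∨ ic x q)
    {X : Set P} (hX : IsConsistent ic X) : ∃ S : Set P, IsCSub le ic C S ∧ X ⊆ S := by
  obtain ⟨S, hXS, hS⟩ := hX.exists_maximal_superset
  exact ⟨S, IsConsistent.isCSub_of_maximal hirrefl hsymm hle hC hS, hXS⟩

/-- In a PPIP, every consistent subset is contained in some consistent subspace. -/
theorem stmt4 (P : Type*) [Fintype P] (le ic : P → P → Prop) (C : P → P → P → Prop)
    (h : IsPPIP P le ic C) (X : Set P)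
    (hX : ∀ p q, p ∈ X → q ∈ X → ¬ ic p q) :
    ∃ S : Set P, IsCSub le ic C S ∧ X ⊆ S :=
  stmt4_general h.not_ic_self h.ic_symm h.ic_of_ic_of_le h.ic_or_ic_of_collinear hX
end

section
/- Let L be a finite semilattice and B ⊆ L a (∧,∨)-closed subset. Then the number of ∨-irreducible elements of the semilattice B is at most the number of ∨-irreducible elements of L. -/
/-- `j` is the least upper bound of `a` and `b` within the subset `B`. -/
def IsLUBwithin {α : Type*} [Preorder α] (B : Set α) (a b j : α) : Prop :=
  j ∈ B ∧ a ≤ j ∧ b ≤ j ∧ ∀ u ∈ B, a ≤ u → b ≤ u → j ≤ u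

/-- The join of `a` and `b` exists in the semilattice `B`. -/
def JoinExistsIn {α : Type*} [Preorder α] (B : Set α) (a b : α) : Prop :=
  ∃ j, IsLUBwithin B a b j

/-- `l` is a ∨-irreducible element of the semilattice `B`: `l ∈ B`, `l` is not the
minimum element of `B`, and whenever `l` is the join (within `B`) of `a, b ∈ B`,
`l = a` or `l = b`. -/
def JoinIrredIn {α : Type*} [Preorder α] (B : Set α) (l : α) : Prop :=
  l ∈ B ∧ (¬ ∀ x ∈ B, l ≤ x) ∧
  ∀ a b, a ∈ B → b ∈ B → IsLUBwithin B a b l → l = a ∨ l = b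

/-- `B` is (∧,∨)-closed: closed under meets and under those joins that exist. -/
def WedgeVeeClosed {α : Type*} [SemilatticeInf α] (B : Set α) : Prop :=
  (∀ a ∈ B, ∀ b ∈ B, a ⊓ b ∈ B) ∧
  (∀ a ∈ B, ∀ b ∈ B, ∀ j, IsLUB ({a, b} : Set α) j → j ∈ B)

/-- A collinear triple in the semilattice `B`: pairwise incomparable, all pairwise
joins exist in `B` and coincide. -/
def CollinearIn {α : Type*} [Preorder α] (B : Set α) (x y z : α) : Prop :=
  Incomp x y ∧ Incomp y z ∧ Incomp z x ∧
  ∃ j, IsLUBwithin B x y j ∧ IsLUBwithin B y z j ∧ IsLUBwithin B z x j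

/-!
For a join-irreducible `b` of `B`, the elements of `B` strictly below `b` form a nonempty directed
set: the join in `L` of two of them exists, lies in `B`, and is not `b`. A minimal `l ≤ b` below no
element of this directed set is join-irreducible in `L`. As `B` is closed under meets, `b` is the
least element of `B` above `l`, so `b` is recovered from `l` and `b ↦ l` is injective.
-/

theorem exists_isLUB_of_bddAbove {α : Type*} [SemilatticeInf α] [WellFoundedLT α] {s : Set α}
    (hs : BddAbove s) : ∃ j, IsLUB s j := by
  obtain ⟨j, hj⟩ := exists_minimal_of_wellFoundedLT (· ∈ upperBounds s) hs
  have inf_mem {u : α} (hu : u ∈ upperBounds s) : j ⊓ u ∈ upperBounds s :=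
    fun x hx => le_inf (hj.prop hx) (hu hx)
  exact ⟨j, hj.prop, fun u hu => (hj.le_of_le (inf_mem hu) inf_le_left).trans inf_le_right⟩

theorem exists_joinIrred_le_of_directedOn {α : Type*} [PartialOrder α] [WellFoundedLT α]
    {s : Set α} {b : α} (hne : s.Nonempty) (hdir : DirectedOn (· ≤ ·) s) (hb : ∀ x ∈ s, ¬ b ≤ x) :
    ∃ l, JoinIrred l ∧ l ≤ b ∧ ∀ x ∈ s, ¬ l ≤ x := by
  obtain ⟨l, hl⟩ :=
    exists_minimal_of_wellFoundedLT (fun l => l ≤ b ∧ ∀ x ∈ s, ¬ l ≤ x) ⟨b, le_rfl, hb⟩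
  obtain ⟨hlb, hls⟩ := hl.prop
  have exists_ge {a : α} (hal : a < l) : ∃ x ∈ s, a ≤ x := by
    by_contra! has
    exact hl.not_prop_of_lt hal ⟨hal.le.trans hlb, has⟩
  refine ⟨l, ⟨fun hmin => ?_, fun a a' hl_lub => ?_⟩, hlb, hls⟩
  · obtain ⟨x, hx⟩ := hne
    exact hls x hx (hmin x)
  · by_contra! ⟨hla, hla'⟩
    obtain ⟨x, hx, hax⟩ := exists_ge ((hl_lub.1 (by simp)).lt_of_ne' hla)
    obtain ⟨x', hx', hax'⟩ := exists_ge ((hl_lub.1 (by simp)).lt_of_ne' hla')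
    obtain ⟨y, hy, hxy, hxy'⟩ := hdir x hx x' hx'
    exact hls y hy (hl_lub.2 (by simp [hax.trans hxy, hax'.trans hxy']))

theorem isLUBwithin_of_isLUB {α : Type*} [Preorder α] {B : Set α} {a b j : α} (hjB : j ∈ B)
    (hj : IsLUB {a, b} j) : IsLUBwithin B a b j :=
  ⟨hjB, hj.1 (by simp), hj.1 (by simp), fun u _ hau hbu => hj.2 (by simp [hau, hbu])⟩

theorem WedgeVeeClosed.infClosed {α : Type*} [SemilatticeInf α] {B : Set α}
    (hB : WedgeVeeClosed B) : InfClosed B :=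
  fun a ha b hb => hB.1 a ha b hb

namespace JoinIrredIn

variable {L : Type*} [SemilatticeInf L] {B : Set L} {b : L}

theorem nonempty_inter_Iio (hb : JoinIrredIn B b) (hB : InfClosed B) :
    (B ∩ Set.Iio b).Nonempty := by
  obtain ⟨hbB, hmin, -⟩ := hb
  push Not at hmin
  obtain ⟨x, hx, hbx⟩ := hmin
  exact ⟨b ⊓ x, hB hbB hx, inf_lt_left.2 hbx⟩

variable [WellFoundedLT L]

theorem directedOn_inter_Iio (hb : JoinIrredIn B b) (hB : WedgeVeeClosed B) :
    DirectedOn (· ≤ ·) (B ∩ Set.Iio b) := by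
  rintro x ⟨hx, hxb : x < b⟩ x' ⟨hx', hxb' : x' < b⟩
  have hbound : b ∈ upperBounds {x, x'} := by simp [hxb.le, hxb'.le]
  obtain ⟨j, hj⟩ := exists_isLUB_of_bddAbove ⟨b, hbound⟩
  have hjB : j ∈ B := hB.2 x hx x' hx' j hj
  have hjb : j ≠ b := by
    rintro rfl
    exact (hb.2.2 x x' hx hx' (isLUBwithin_of_isLUB hjB hj)).elim hxb.ne' hxb'.ne'
  exact ⟨j, ⟨hjB, (hj.2 hbound).lt_of_ne hjb⟩, hj.1 (by simp), hj.1 (by simp)⟩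

theorem exists_joinIrred_isLeast (hb : JoinIrredIn B b) (hB : WedgeVeeClosed B) :
    ∃ l, JoinIrred l ∧ IsLeast (B ∩ Set.Ici l) b := by
  obtain ⟨l, hl, hlb, hlB⟩ := exists_joinIrred_le_of_directedOn (hb.nonempty_inter_Iio hB.infClosed)
    (hb.directedOn_inter_Iio hB) fun x hx => not_le_of_gt hx.2
  refine ⟨l, hl, ⟨hb.1, hlb⟩, fun x ⟨hx, hlx⟩ => ?_⟩
  by_contra hbx
  exact hlB (b ⊓ x) ⟨hB.infClosed hb.1 hx, inf_lt_left.2 hbx⟩ (le_inf hlb hlx)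

end JoinIrredIn

theorem stmt8_general (L : Type*) [SemilatticeInf L] [WellFoundedLT L]
    (B : Set L) (hB : WedgeVeeClosed B) :
    Cardinal.mk {l : L | JoinIrredIn B l} ≤ Cardinal.mk {l : L | JoinIrred l} := by
  choose f hf hleast using
    fun b : {b : L | JoinIrredIn B b} => JoinIrredIn.exists_joinIrred_isLeast b.2 hB
  have hinj : f.Injective := fun b b' h => Subtype.ext ((hleast b).unique (h ▸ hleast b'))
  exact Cardinal.mk_le_of_injective (hinj.codRestrict hf)

/-- For a (∧,∨)-closed subset `B` of a finite semilattice `L`, the number of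
∨-irreducible elements of `B` is at most the number of ∨-irreducible elements of `L`. -/
theorem stmt8 (L : Type*) [SemilatticeInf L] [Fintype L]
    (B : Set L) (hB : WedgeVeeClosed B) :
    {l : L | JoinIrredIn B l}.ncard ≤ {l : L | JoinIrred l}.ncard :=
  Cardinal.toNat_le_toNat (stmt8_general L B hB) (Cardinal.lt_aleph0_of_finite _)
end

section
/- Let L be a finite semilattice and B a (∧,∨)-closed subset of L^n. Then the number of ∨-irreducible elements of the semilattice B is at most n times the number of ∨-irreducible elements of L. -/
/-! Let `m` be maximal among the elements of `B` strictly below a ∨-irreducible element `b` of `B`.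
If some `y < b` in `B` were not below `m`, then `b` would be the join of `m` and `y` in `B`; so `m`
is the greatest such element. Some coordinate `i` has `b i ≰ m i`, so some ∨-irreducible `l`
satisfies `l ≤ b i` and `l ≰ m i`. Every `c ∈ B` with `l ≤ c i` is above `b`: otherwise `b ⊓ c`
lies in `B` strictly below `b`, hence below `m`, and `l ≤ (b ⊓ c) i ≤ m i`. So the pair `(i, l)`
determines `b` as the least element of `B` whose `i`-th coordinate is above `l`. -/

theorem exists_joinIrred_le_not_le {α : Type*} [PartialOrder α] [WellFoundedLT α] {x y : α}
    (hxy : ¬ x ≤ y) : ∃ l, JoinIrred l ∧ l ≤ x ∧ ¬ l ≤ y := by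
  obtain ⟨l, hl⟩ := exists_minimal_of_wellFoundedLT (fun v => v ≤ x ∧ ¬ v ≤ y) ⟨x, le_rfl, hxy⟩
  have le_of_lt_l : ∀ c < l, c ≤ y := fun c hc =>
    by_contra fun hcy => hl.not_prop_of_lt hc ⟨hc.le.trans hl.prop.1, hcy⟩
  refine ⟨l, ⟨fun hmin => hl.prop.2 (hmin y), fun a b hab => ?_⟩, hl.prop⟩
  by_contra! hne
  have hay : a ≤ y := le_of_lt_l a ((hab.1 (by simp)).lt_of_ne' hne.1)
  have hby : b ≤ y := le_of_lt_l b ((hab.1 (by simp)).lt_of_ne' hne.2)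
  exact hl.prop.2 ((isLUB_le_iff hab).2 (by simp [hay, hby]))

namespace JoinIrredIn

section SemilatticeInf

variable {α : Type*} [SemilatticeInf α] {B : Set α} {b m : α}

theorem exists_lt (hb : JoinIrredIn B b) (hB : InfClosed B) : ∃ x ∈ B, x < b := by
  obtain ⟨hbB, hmin, -⟩ := hb
  push Not at hmin
  obtain ⟨x, hxB, hbx⟩ := hmin
  exact ⟨b ⊓ x, hB hbB hxB, inf_lt_left.2 hbx⟩

theorem isGreatest_of_maximal (hb : JoinIrredIn B b) (hB : InfClosed B)
    (hm : Maximal (fun x => x ∈ B ∧ x < b) m) : IsGreatest {x | x ∈ B ∧ x < b} m := by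
  obtain ⟨hbB, -, hirr⟩ := hb
  refine ⟨hm.prop, fun y hy => ?_⟩
  by_contra hym
  have hlub : IsLUBwithin B m y b := by
    refine ⟨hbB, hm.prop.2.le, hy.2.le, fun u huB hmu hyu => ?_⟩
    by_contra hbu
    have hle : b ⊓ u ≤ m :=
      hm.le_of_ge ⟨hB hbB huB, inf_lt_left.2 hbu⟩ (le_inf hm.prop.2.le hmu)
    exact hym ((le_inf hy.2.le hyu).trans hle)
  exact (hirr m y hm.prop.1 hy.1 hlub).elim hm.prop.2.ne' hy.2.ne'

theorem exists_isGreatest_lt [WellFoundedGT B] (hb : JoinIrredIn B b) (hB : InfClosed B) :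
    ∃ m, IsGreatest {x | x ∈ B ∧ x < b} m := by
  obtain ⟨x, hxB, hxb⟩ := hb.exists_lt hB
  obtain ⟨m, hm⟩ := exists_maximal_of_wellFoundedGT (fun x : B => (x : α) < b) ⟨⟨x, hxB⟩, hxb⟩
  exact ⟨m, hb.isGreatest_of_maximal hB
    ⟨⟨m.2, hm.prop⟩, fun y hy hmy => hm.le_of_ge (y := ⟨y, hy.1⟩) hy.2 hmy⟩⟩

end SemilatticeInf

theorem exists_isLeast_le_apply {ι : Type*} {L : ι → Type*} [∀ i, SemilatticeInf (L i)]
    [∀ i, WellFoundedLT (L i)] {B : Set (∀ i, L i)} [WellFoundedGT B] {b : ∀ i, L i}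
    (hb : JoinIrredIn B b) (hB : InfClosed B) :
    ∃ p : Σ i, {l : L i | JoinIrred l}, IsLeast {c | c ∈ B ∧ p.2 ≤ c p.1} b := by
  obtain ⟨m, hm, hgreatest⟩ := hb.exists_isGreatest_lt hB
  obtain ⟨i, hi⟩ : ∃ i, ¬ b i ≤ m i := by simpa only [Pi.le_def, not_forall] using hm.2.not_ge
  obtain ⟨l, hl, hlb, hlm⟩ := exists_joinIrred_le_not_le hi
  refine ⟨⟨i, l, hl⟩, ⟨hb.1, hlb⟩, fun c ⟨hcB, hlc⟩ => ?_⟩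
  by_contra hbc
  have hle : b ⊓ c ≤ m := hgreatest ⟨hB hb.1 hcB, inf_lt_left.2 hbc⟩
  exact hlm ((le_inf hlb hlc).trans (hle i))

end JoinIrredIn

open Cardinal in
theorem stmt9_general {ι : Type*} {L : ι → Type*} [∀ i, SemilatticeInf (L i)]
    [∀ i, WellFoundedLT (L i)] {B : Set (∀ i, L i)} [WellFoundedGT B] (hB : InfClosed B) :
    #{b | JoinIrredIn B b} ≤ Cardinal.sum fun i => #{l : L i | JoinIrred l} := by
  choose f hf using fun b : {b | JoinIrredIn B b} => b.2.exists_isLeast_le_apply hB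
  rw [← mk_sigma]
  exact mk_le_of_injective (f := f) fun b c h => Subtype.ext ((hf b).unique (h ▸ hf c))

/-- For a (∧,∨)-closed subset `B` of the product `Lⁿ` of a finite semilattice `L`,
the number of ∨-irreducible elements of `B` is at most `n` times the number of
∨-irreducible elements of `L`. -/
theorem stmt9 (L : Type*) [SemilatticeInf L] [Fintype L] (n : ℕ)
    (B : Set (Fin n → L)) (hB : WedgeVeeClosed B) :
    {b : Fin n → L | JoinIrredIn B b}.ncard ≤ n * {l : L | JoinIrred l}.ncard := by
  have h := stmt9_general (L := fun _ : Fin n => L) fun _ ha _ hb => hB.1 _ ha _ hb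
  simpa [← Set.cast_ncard (Set.toFinite _), ← Nat.cast_mul] using h
end

section
/- Let L be a finite meet-semilattice. Define a ⊔ b := a ∨ b if the join a ∨ b exists in L, and a ⊔ b := a ∧ b otherwise, and define t(x,y,z,w) := ((y ∧ z) ⊔ (z ∧ w)) ⊔ (w ∧ y). Then t is a 3-edge term: for all x, y ∈ L, t(y,y,x,x) = x, t(y,x,y,x) = x, and t(x,x,x,y) = x. -/
open Classical in
/-- `a ⊔ b`: the join of `a` and `b` if it exists, and `a ⊓ b` otherwise. -/
noncomputable def hsup {α : Type*} [SemilatticeInf α] (a b : α) : α :=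
  if h : ∃ j, IsLUB ({a, b} : Set α) j then h.choose else a ⊓ b

/-- `t(x,y,z,w) = ((y ∧ z) ⊔ (z ∧ w)) ⊔ (w ∧ y)`. -/
noncomputable def tEdge {α : Type*} [SemilatticeInf α] (x y z w : α) : α :=
  hsup (hsup (y ⊓ z) (z ⊓ w)) (w ⊓ y)

section Hsup

variable {α : Type*} [SemilatticeInf α] {a b c : α}

theorem hsup_eq_of_isLUB (h : IsLUB {a, b} c) : hsup a b = c := by
  have exists_isLUB : ∃ j, IsLUB {a, b} j := ⟨c, h⟩
  rw [hsup, dif_pos exists_isLUB]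
  exact exists_isLUB.choose_spec.unique h

theorem hsup_of_le_left (h : b ≤ a) : hsup a b = a :=
  hsup_eq_of_isLUB <| IsGreatest.isLUB ⟨Set.mem_insert a {b}, by simp [upperBounds, h]⟩

theorem hsup_of_le_right (h : a ≤ b) : hsup a b = b :=
  hsup_eq_of_isLUB <| IsGreatest.isLUB ⟨Set.mem_insert_of_mem a rfl, by simp [upperBounds, h]⟩

end Hsup

/-- In its last three arguments `t` is a majority operation: when two of them equal `x`, one of the
three meets is `x` and the other two lie below it, so each `⊔` is taken of comparable elements. -/
theorem stmt10_general {α : Type*} [SemilatticeInf α] (u x y : α) :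
    tEdge u y x x = x ∧ tEdge u x y x = x ∧ tEdge u x x y = x := by
  refine ⟨?_, ?_, ?_⟩
  · calc tEdge u y x x = hsup (hsup (y ⊓ x) x) (x ⊓ y) := by rw [tEdge, inf_idem]
      _ = hsup x (x ⊓ y) := by rw [hsup_of_le_right inf_le_right]
      _ = x := hsup_of_le_left inf_le_left
  · calc tEdge u x y x = hsup (hsup (x ⊓ y) (x ⊓ y)) x := by rw [tEdge, inf_idem, inf_comm y x]
      _ = hsup (x ⊓ y) x := by rw [hsup_of_le_left le_rfl]
      _ = x := hsup_of_le_right inf_le_left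
  · calc tEdge u x x y = hsup (hsup x (x ⊓ y)) (y ⊓ x) := by rw [tEdge, inf_idem]
      _ = hsup x (y ⊓ x) := by rw [hsup_of_le_left inf_le_left]
      _ = x := hsup_of_le_left inf_le_right

/-- `t` is a 3-edge term on any finite meet-semilattice. -/
theorem stmt10 (L : Type*) [SemilatticeInf L] [Fintype L] :
    ∀ x y : L, tEdge y y x x = x ∧ tEdge y x y x = x ∧ tEdge x x x y = x := by
  intro x y
  exact ⟨(stmt10_general y x y).1, (stmt10_general y x y).2.1, (stmt10_general x x y).2.2⟩
end

section
/- (Locally Comparing Property) Let L be a finite modular semilattice, B a (∧,∨)-closed subset of L^n, i ∈ [n] and l ∈ L, and assume the base e^i_l exists. Then for every b ∈ B: e^i_l ≤ b if and only if l ≤ b[i]. -/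
theorem le_iff_le_map_of_isLeast_fiber {α β : Type*} [SemilatticeInf α] [SemilatticeInf β]
    (f : InfHom α β) {B : Set α} (hB : InfClosed B) {l : β} {e b : α}
    (he : IsLeast (B ∩ f ⁻¹' {l}) e) (hb : b ∈ B) : e ≤ b ↔ l ≤ f b := by
  obtain ⟨⟨heB, hel : f e = l⟩, hmin⟩ := he
  constructor
  · intro h
    exact hel.ge.trans (OrderHomClass.mono f h)
  · intro h
    have map_inf_eq : f (e ⊓ b) = l := by rw [map_inf, hel, inf_eq_left.mpr h]
    have le_inf_self : e ≤ e ⊓ b := hmin ⟨hB heB hb, map_inf_eq⟩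
    exact le_inf_self.trans inf_le_right

theorem stmt11_general {ι : Type*} {L : ι → Type*} [∀ i, SemilatticeInf (L i)]
    {B : Set (∀ i, L i)} (hB : InfClosed B) {i : ι} {l : L i} {e : ∀ i, L i}
    (he : IsLeast {b | b ∈ B ∧ b i = l} e) : ∀ b ∈ B, (e ≤ b ↔ l ≤ b i) :=
  fun _ hb => le_iff_le_map_of_isLeast_fiber ⟨Function.eval i, fun _ _ => rfl⟩ hB he hb

/-- Locally Comparing Property: if the base `e = e^i_l` exists, then for every `b ∈ B`,
`e ≤ b` iff `l ≤ b i`. -/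
theorem stmt11 (L : Type*) [SemilatticeInf L] [Fintype L] (hL : ModularSemilattice L)
    (n : ℕ) (B : Set (Fin n → L)) (hB : WedgeVeeClosed B)
    (i : Fin n) (l : L) (e : Fin n → L)
    (he : IsLeast {b : Fin n → L | b ∈ B ∧ b i = l} e) :
    ∀ b ∈ B, (e ≤ b ↔ l ≤ b i) :=
  stmt11_general hB.infClosed he
end

section
/- Let L be a finite modular semilattice and B a (∧,∨)-closed subset of L^n. An element b ∈ B is a ∨-irreducible element of the semilattice B if and only if there exist i ∈ [n] and a ∨-irreducible element l of the semilattice π_i(B) such that b = e^i_l. -/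
theorem IsLUBwithin.of_isLUB {α : Type*} [Preorder α] {B : Set α} {a c j : α}
    (hj : IsLUB {a, c} j) (hjB : j ∈ B) : IsLUBwithin B a c j :=
  ⟨hjB, hj.1 (by simp), hj.1 (by simp), fun u _ hau hcu => hj.2 (by simp [hau, hcu])⟩

theorem IsLUBwithin.isLUB {α : Type*} [SemilatticeInf α] {B : Set α} (hB : WedgeVeeClosed B)
    {a c j : α} (ha : a ∈ B) (hc : c ∈ B) (hac : JoinExists a c) (hj : IsLUBwithin B a c j) :
    IsLUB {a, c} j := by
  obtain ⟨k, hk⟩ := hac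
  obtain ⟨-, haj, hcj, hj_le⟩ := hj
  have hkj : k ≤ j := hk.2 (by simp [haj, hcj])
  have hjk : j ≤ k := hj_le k (hB.2 a ha c hc k hk) (hk.1 (by simp)) (hk.1 (by simp))
  rwa [hjk.antisymm hkj]

theorem isLUB_pair_pi {ι : Type*} {L : ι → Type*} [∀ i, Preorder (L i)] {a c j : ∀ i, L i} :
    IsLUB {a, c} j ↔ ∀ i, IsLUB {a i, c i} (j i) := by
  simp only [isLUB_pi, Set.image_pair, Function.eval]

theorem JoinExists.pi {ι : Type*} {L : ι → Type*} [∀ i, Preorder (L i)] {a c : ∀ i, L i}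
    (h : ∀ i, JoinExists (a i) (c i)) : JoinExists a c := by
  choose j hj using h
  exact ⟨j, isLUB_pair_pi.2 hj⟩

section StrictlyBelow

variable {α : Type*} [SemilatticeInf α] {B : Set α} {b : α}

theorem inf_mem_inter_Iio {x : α} (hB : InfClosed B) (hb : b ∈ B) (hx : x ∈ B)
    (hbx : ¬ b ≤ x) : b ⊓ x ∈ B ∩ Set.Iio b :=
  ⟨hB hb hx, inf_lt_left.2 hbx⟩

theorem JoinIrredIn.nonempty_inter_Iio_s12 (hB : InfClosed B) (hb : JoinIrredIn B b) :
    (B ∩ Set.Iio b).Nonempty := by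
  obtain ⟨hbB, hmin, -⟩ := hb
  push Not at hmin
  obtain ⟨x, hx, hbx⟩ := hmin
  exact ⟨b ⊓ x, inf_mem_inter_Iio hB hbB hx hbx⟩

theorem JoinIrredIn.directedOn_inter_Iio_s12 (hB : InfClosed B) (hb : JoinIrredIn B b) :
    DirectedOn (· ≤ ·) (B ∩ Set.Iio b) := by
  rintro x ⟨hx, hxb⟩ y ⟨hy, hyb⟩
  have not_isLUBwithin : ¬ IsLUBwithin B x y b := fun h =>
    (hb.2.2 x y hx hy h).elim hxb.ne' hyb.ne'
  obtain ⟨u, hu, hxu, hyu, hbu⟩ : ∃ u ∈ B, x ≤ u ∧ y ≤ u ∧ ¬ b ≤ u := by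
    by_contra! h
    exact not_isLUBwithin ⟨hb.1, hxb.le, hyb.le, h⟩
  exact ⟨b ⊓ u, inf_mem_inter_Iio hB hb.1 hu hbu, le_inf hxb.le hxu, le_inf hyb.le hyu⟩

theorem JoinIrredIn.exists_lt_forall_le {κ : Type*} [Finite κ] (hB : InfClosed B)
    (hb : JoinIrredIn B b) {f : κ → α} (hf : ∀ k, f k ∈ B ∩ Set.Iio b) :
    ∃ m < b, ∀ k, f k ≤ m := by
  have := (hb.nonempty_inter_Iio_s12 hB).to_subtype
  have := directedOn_iff_isDirectedOrder.1 (hb.directedOn_inter_Iio_s12 hB)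
  obtain ⟨m, hm⟩ := Finite.exists_le fun k => (⟨f k, hf k⟩ : ↥(B ∩ Set.Iio b))
  exact ⟨m, m.2.2, hm⟩

end StrictlyBelow

section Base

variable {ι : Type*} {L : ι → Type*} [∀ i, SemilatticeInf (L i)] {B : Set (∀ i, L i)} {i : ι}
  {l : L i} {b : ∀ i, L i}

/-- `b` is the base `e^i_l` of `B`: the least element of `B` whose `i`-th coordinate is `l`. This
is a relation rather than a function, so an undefined base is one that no `b` satisfies. -/
def IsBase (B : Set (∀ i, L i)) (i : ι) (l : L i) (b : ∀ i, L i) : Prop :=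
  IsLeast {x | x ∈ B ∧ x i = l} b

theorem IsBase.le_iff (hB : InfClosed B) (hb : IsBase B i l b) {x : ∀ i, L i} (hx : x ∈ B) :
    b ≤ x ↔ l ≤ x i := by
  obtain ⟨⟨hbB, rfl⟩, hleast⟩ := hb
  refine ⟨fun h => h i, fun h => ?_⟩
  have hbx : b ≤ b ⊓ x := hleast ⟨hB hbB hx, inf_eq_left.2 h⟩
  exact hbx.trans inf_le_right

theorem IsBase.forall_le_iff (hB : InfClosed B) (hb : IsBase B i l b) :
    (∀ x ∈ B, b ≤ x) ↔ ∀ t ∈ Function.eval i '' B, l ≤ t := by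
  rw [Set.forall_mem_image]
  exact forall₂_congr fun x hx => hb.le_iff hB hx

theorem IsBase.isLUBwithin_inf_inf (hB : InfClosed B) (hb : IsBase B i l b) {a c : ∀ i, L i}
    (hl : IsLUBwithin (Function.eval i '' B) (a i) (c i) l) :
    IsLUBwithin B (b ⊓ a) (b ⊓ c) b := by
  obtain ⟨-, hal, hcl, hl_le⟩ := hl
  refine ⟨hb.1.1, inf_le_left, inf_le_left, fun u hu hau hcu => ?_⟩
  have hbi : b i = l := hb.1.2
  have hai : a i ≤ u i := (le_inf (hal.trans_eq hbi.symm) le_rfl).trans (hau i)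
  have hci : c i ≤ u i := (le_inf (hcl.trans_eq hbi.symm) le_rfl).trans (hcu i)
  exact (hb.le_iff hB hu).2 (hl_le (u i) ⟨u, hu, rfl⟩ hai hci)

theorem IsBase.joinIrredIn_eval_image (hB : InfClosed B) (hb : IsBase B i l b)
    (hirr : JoinIrredIn B b) : JoinIrredIn (Function.eval i '' B) l := by
  obtain ⟨hbB, hmin, hsplit⟩ := hirr
  refine ⟨⟨b, hb.1⟩, mt (hb.forall_le_iff hB).2 hmin, ?_⟩
  have eq_of_inf_eq {x : ∀ i, L i} (hx : x ∈ B) (hxl : x i ≤ l) (h : b = b ⊓ x) : l = x i :=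
    ((hb.le_iff hB hx).1 (inf_eq_left.1 h.symm)).antisymm hxl
  rintro _ _ ⟨a, ha, rfl⟩ ⟨c, hc, rfl⟩ hl
  exact (hsplit _ _ (hB hbB ha) (hB hbB hc) (hb.isLUBwithin_inf_inf hB hl)).imp
    (eq_of_inf_eq ha hl.2.1) (eq_of_inf_eq hc hl.2.2.1)

theorem IsLUBwithin.eval_image (hL : ∀ i (x y : L i), (∃ u, x ≤ u ∧ y ≤ u) → JoinExists x y)
    (hB : WedgeVeeClosed B) {a c : ∀ i, L i} (ha : a ∈ B) (hc : c ∈ B)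
    (hb : IsLUBwithin B a c b) (i : ι) :
    IsLUBwithin (Function.eval i '' B) (a i) (c i) (b i) := by
  have hac : JoinExists a c := .pi fun k => hL k _ _ ⟨b k, hb.2.1 k, hb.2.2.1 k⟩
  exact .of_isLUB (isLUB_pair_pi.1 (hb.isLUB hB ha hc hac) i) ⟨b, hb.1, rfl⟩

theorem IsBase.joinIrredIn_of_eval_image
    (hL : ∀ i (x y : L i), (∃ u, x ≤ u ∧ y ≤ u) → JoinExists x y) (hB : WedgeVeeClosed B)
    (hb : IsBase B i l b) (hirr : JoinIrredIn (Function.eval i '' B) l) : JoinIrredIn B b := by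
  obtain ⟨-, hmin, hsplit⟩ := hirr
  refine ⟨hb.1.1, mt (hb.forall_le_iff hB.infClosed).1 hmin, fun a c ha hc hlub => ?_⟩
  have eq_of_apply_eq {x : ∀ i, L i} (hx : x ∈ B) (hxb : x ≤ b) (h : l = x i) : b = x :=
    ((hb.le_iff hB.infClosed hx).2 h.le).antisymm hxb
  have hl : IsLUBwithin (Function.eval i '' B) (a i) (c i) l :=
    hb.1.2 ▸ hlub.eval_image hL hB ha hc i
  exact (hsplit (a i) (c i) ⟨a, ha, rfl⟩ ⟨c, hc, rfl⟩ hl).imp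
    (eq_of_apply_eq ha hlub.2.1) (eq_of_apply_eq hc hlub.2.2.1)

theorem JoinIrredIn.exists_isBase [Finite ι] (hB : InfClosed B) (hb : JoinIrredIn B b) :
    ∃ i, IsBase B i (b i) b := by
  by_contra! hbase
  have exists_lt_apply_eq (i : ι) : ∃ y ∈ B ∩ Set.Iio b, y i = b i := by
    obtain ⟨x, hx, hxi, hbx⟩ : ∃ x ∈ B, x i = b i ∧ ¬ b ≤ x := by
      by_contra! h
      exact hbase i ⟨⟨hb.1, rfl⟩, fun x hx => h x hx.1 hx.2⟩
    exact ⟨b ⊓ x, inf_mem_inter_Iio hB hb.1 hx hbx, inf_eq_left.2 hxi.ge⟩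
  choose y hy hyi using exists_lt_apply_eq
  obtain ⟨m, hmb, hym⟩ := hb.exists_lt_forall_le hB hy
  exact hmb.not_ge fun i => (hyi i).ge.trans (hym i i)

end Base

theorem stmt12_general {ι : Type*} [Finite ι] {L : ι → Type*} [∀ i, SemilatticeInf (L i)]
    (hL : ∀ i (x y : L i), (∃ u, x ≤ u ∧ y ≤ u) → JoinExists x y)
    {B : Set (∀ i, L i)} (hB : WedgeVeeClosed B) (b : ∀ i, L i) :
    JoinIrredIn B b ↔
      ∃ (i : ι) (l : L i),
        JoinIrredIn {t : L i | ∃ c ∈ B, c i = t} l ∧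
        IsLeast {x : ∀ i, L i | x ∈ B ∧ x i = l} b := by
  constructor
  · intro hb
    obtain ⟨i, hbase⟩ := hb.exists_isBase hB.infClosed
    exact ⟨i, b i, IsBase.joinIrredIn_eval_image hB.infClosed hbase hb, hbase⟩
  · rintro ⟨i, l, hl, hbase⟩
    exact IsBase.joinIrredIn_of_eval_image hL hB hbase hl

/-- An element `b ∈ B` is ∨-irreducible in `B` iff `b = e^i_l` for some coordinate `i`
and some ∨-irreducible element `l` of `π_i(B)`. -/
theorem stmt12 (L : Type*) [SemilatticeInf L] [Fintype L] (hL : ModularSemilattice L)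
    (n : ℕ) (B : Set (Fin n → L)) (hB : WedgeVeeClosed B) (b : Fin n → L) :
    JoinIrredIn B b ↔
      ∃ (i : Fin n) (l : L),
        JoinIrredIn {t : L | ∃ c ∈ B, c i = t} l ∧
        IsLeast {x : Fin n → L | x ∈ B ∧ x i = l} b :=
  stmt12_general (fun _ => hL.1) hB b
end
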